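/- Fix an integer d ≥ 3 and a real p with 1/(d-1) < p < 1. For every b > 0 there exist δ, c, C, R > 0 such that: if 𝒢 is a regular (b,d)-expander on n vertices with girth exceeding R, then with probability at least 1 − C·exp(−c n), a largest connected component C₁ of the random graph G ∼ 𝒢_p has no separator of size at most δn; here a set S of vertices of a graph H on m vertices is a separator if there is a partition V(H) = A ∪ B ∪ S into pairwise disjoint sets such that H has no edges between A and B and |A| ≤ 2m/3 and |B| ≤ 2m/3. -/

import Mathlib

open scoped Classical symmDiff

noncomputable section

namespace Percolation

variable {V : Type} [Fintype V] [DecidableEq V]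

/-- The edge set of `G` as a finset. -/
noncomputable def edgeFinset' (G : SimpleGraph V) : Finset (Sym2 V) :=
  Finset.univ.filter (· ∈ G.edgeSet)

/-- Probability that bond percolation on `G` with parameter `p` produces a spanning
subgraph satisfying `P`. -/
noncomputable def percProb (G : SimpleGraph V) (p : ℝ) (P : SimpleGraph V → Prop) : ℝ :=
  ∑ s ∈ (edgeFinset' G).powerset,
    (p ^ s.card * (1 - p) ^ ((edgeFinset' G).card - s.card)) *
      (if P (SimpleGraph.fromEdgeSet (↑s)) then 1 else 0)

/-- Joint probability for two independent bond percolations on `G`. -/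
noncomputable def percProb2 (G : SimpleGraph V) (p₁ p₂ : ℝ)
    (P : SimpleGraph V → SimpleGraph V → Prop) : ℝ :=
  ∑ s ∈ (edgeFinset' G).powerset, ∑ t ∈ (edgeFinset' G).powerset,
    (p₁ ^ s.card * (1 - p₁) ^ ((edgeFinset' G).card - s.card)) *
    (p₂ ^ t.card * (1 - p₂) ^ ((edgeFinset' G).card - t.card)) *
      (if P (SimpleGraph.fromEdgeSet (↑s)) (SimpleGraph.fromEdgeSet (↑t)) then 1 else 0)

/-- Number of edges of `G` joining `S` to its complement. -/
noncomputable def cutCard (G : SimpleGraph V) (S : Finset V) : ℕ :=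
  ((edgeFinset' G).filter (fun e => ∃ x ∈ S, ∃ y, y ∉ S ∧ e = s(x, y))).card

/-- `G` is a `(b,d)`-expander: max degree at most `d`, and every vertex set of size at most
`n/2` has at least `b|S|` edges to its complement. -/
def IsExpander (G : SimpleGraph V) (b : ℝ) (d : ℕ) : Prop :=
  (∀ v, (G.neighborSet v).ncard ≤ d) ∧
  ∀ S : Finset V, (S.card : ℝ) ≤ Fintype.card V / 2 → b * S.card ≤ cutCard G S

/-- `G` is a regular `(b,d)`-expander. -/
def IsRegularExpander (G : SimpleGraph V) (b : ℝ) (d : ℕ) : Prop :=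
  IsExpander G b d ∧ ∀ v, (G.neighborSet v).ncard = d

/-- The vertices of the connected component `c` of `G`. -/
noncomputable def compVerts (G : SimpleGraph V) (c : G.ConnectedComponent) : Finset V :=
  Finset.univ.filter (fun v => G.connectedComponentMk v = c)

/-- The edges of the connected component `c` of `G`. -/
noncomputable def compEdges (G : SimpleGraph V) (c : G.ConnectedComponent) : Finset (Sym2 V) :=
  (edgeFinset' G).filter (fun e => ∀ v ∈ e, G.connectedComponentMk v = c)

/-- `c` is a largest connected component of `G`. -/
def IsLargestComp (G : SimpleGraph V) (c : G.ConnectedComponent) : Prop :=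
  ∀ c' : G.ConnectedComponent, (compVerts G c').card ≤ (compVerts G c).card

/-- The 2-core of the connected component `c` of `G` : the maximal subgraph of `G`
supported inside `c` all of whose vertices have degree at least 2. -/
noncomputable def twoCoreComp (G : SimpleGraph V) (c : G.ConnectedComponent) : SimpleGraph V :=
  sSup {H : SimpleGraph V | H ≤ G ∧ (∀ v ∈ H.support, G.connectedComponentMk v = c) ∧
    ∀ v ∈ H.support, 2 ≤ (H.neighborSet v).ncard}

/-- The event `A^R_{x,y}(H)`: the connected component of `y` in `H` with the edge `xy`
removed (if present) has at least `R` vertices. -/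
def eventA (H : SimpleGraph V) (R : ℕ) (x y : V) : Prop :=
  R ≤ (compVerts (H.deleteEdges {s(x, y)})
        ((H.deleteEdges {s(x, y)}).connectedComponentMk y)).card

/-- `E₁(H)`: edges `xy` of `H` such that `A^R_{x,y}` or `A^R_{y,x}` holds. -/
noncomputable def E1set (H : SimpleGraph V) (R : ℕ) : Finset (Sym2 V) :=
  (edgeFinset' H).filter (fun e => ∃ x y, e = s(x, y) ∧ (eventA H R x y ∨ eventA H R y x))

/-- `V₁(H)`: vertices `x` such that for some `y`, `xy ∈ E(H)` and `A^R_{x,y}` holds. -/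
noncomputable def V1set (H : SimpleGraph V) (R : ℕ) : Finset V :=
  Finset.univ.filter (fun x => ∃ y, H.Adj x y ∧ eventA H R x y)

/-- `E₂(H)`: edges `xy` of `H` such that both `A^R_{x,y}` and `A^R_{y,x}` hold. -/
noncomputable def E2set (H : SimpleGraph V) (R : ℕ) : Finset (Sym2 V) :=
  (edgeFinset' H).filter (fun e => ∃ x y, e = s(x, y) ∧ eventA H R x y ∧ eventA H R y x)

/-- `V₂(H)`: vertices incident to an edge of `E₂(H)`. -/
noncomputable def V2set (H : SimpleGraph V) (R : ℕ) : Finset V :=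
  Finset.univ.filter (fun x => ∃ e ∈ E2set H R, x ∈ e)

/-- `V̄₁(H)`: vertices `y` such that `A^R_{x,y}(H)` holds for some `x`. -/
noncomputable def Vbar1 (H : SimpleGraph V) (R : ℕ) : Finset V :=
  Finset.univ.filter (fun y => ∃ x, eventA H R x y)

/-- `S` is `k`-thick in `H`: a union of pairwise disjoint subsets, each of size at least
`k`, each inducing a connected subgraph of `H`. -/
def IsThick (H : SimpleGraph V) (k : ℕ) (S : Finset V) : Prop :=
  ∃ P : Finset (Finset V),
    (∀ T ∈ P, k ≤ T.card ∧ (H.induce (↑T : Set V)).Connected) ∧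
    (↑P : Set (Finset V)).PairwiseDisjoint id ∧ S = P.biUnion id

/-- `S` is a separator of `K`. -/
def IsSeparator {W : Type} [Fintype W] (K : SimpleGraph W) (S : Finset W) : Prop :=
  ∃ A B : Finset W, Disjoint A B ∧ Disjoint A S ∧ Disjoint B S ∧
    (∀ w, w ∈ A ∨ w ∈ B ∨ w ∈ S) ∧
    (∀ a ∈ A, ∀ b ∈ B, ¬ K.Adj a b) ∧
    3 * A.card ≤ 2 * Fintype.card W ∧ 3 * B.card ≤ 2 * Fintype.card W

set_option linter.unusedSectionVars false

section Bernoulli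

variable {α : Type*} [DecidableEq α]

/-- Expectation of `f` over the random subset of `E` retaining each element independently with
probability `p`. -/
def bexp (E : Finset α) (p : ℝ) (f : Finset α → ℝ) : ℝ :=
  ∑ s ∈ E.powerset, p ^ s.card * (1 - p) ^ (E.card - s.card) * f s

lemma bexp_empty (p : ℝ) (f : Finset α → ℝ) : bexp ∅ p f = f ∅ := by
  simp [bexp]

lemma bexp_insert {E : Finset α} {e : α} (he : e ∉ E) (p : ℝ) (f : Finset α → ℝ) :
    bexp (insert e E) p f
      = p * bexp E p (fun s => f (insert e s)) + (1 - p) * bexp E p f := by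
  unfold bexp
  rw [Finset.sum_powerset_insert he, add_comm, Finset.mul_sum, Finset.mul_sum]
  congr 1
  · refine Finset.sum_congr rfl fun s hs => ?_
    have hs' : e ∉ s := fun h => he (Finset.mem_powerset.1 hs h)
    rw [Finset.card_insert_of_notMem hs', Finset.card_insert_of_notMem he,
      Nat.add_sub_add_right]
    ring
  · refine Finset.sum_congr rfl fun s hs => ?_
    have := Finset.card_le_card (Finset.mem_powerset.1 hs)
    rw [Finset.card_insert_of_notMem he, Nat.sub_add_comm this]
    ring

lemma bexp_add (E : Finset α) (p : ℝ) (f g : Finset α → ℝ) :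
    bexp E p (fun s => f s + g s) = bexp E p f + bexp E p g := by
  simp [bexp, mul_add, Finset.sum_add_distrib]

lemma bexp_const_mul (E : Finset α) (p c : ℝ) (f : Finset α → ℝ) :
    bexp E p (fun s => c * f s) = c * bexp E p f := by
  simp only [bexp, Finset.mul_sum]
  exact Finset.sum_congr rfl fun s _ => by ring

lemma bexp_sum {ι : Type*} (E : Finset α) (p : ℝ) (I : Finset ι) (f : ι → Finset α → ℝ) :
    bexp E p (fun s => ∑ i ∈ I, f i s) = ∑ i ∈ I, bexp E p (f i) := by
  simp only [bexp, Finset.mul_sum]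
  exact Finset.sum_comm

lemma bexp_const (E : Finset α) (p c : ℝ) : bexp E p (fun _ => c) = c := by
  induction E using Finset.induction_on with
  | empty => exact bexp_empty _ _
  | insert e E he ih => rw [bexp_insert he, ih]; ring

lemma bexp_one_sub (E : Finset α) (p : ℝ) (f : Finset α → ℝ) :
    bexp E p (fun s => 1 - f s) = 1 - bexp E p f := by
  have h := bexp_add E p (fun _ => 1) (fun s => (-1) * f s)
  rw [bexp_const, bexp_const_mul] at h
  simpa [sub_eq_add_neg] using h

lemma bexp_congr {E : Finset α} {p : ℝ} {f g : Finset α → ℝ} (h : ∀ s ⊆ E, f s = g s) :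
    bexp E p f = bexp E p g :=
  Finset.sum_congr rfl fun s hs => by rw [h s (Finset.mem_powerset.1 hs)]

lemma bexp_mono {E : Finset α} {p : ℝ} (h0 : 0 ≤ p) (h1 : p ≤ 1) {f g : Finset α → ℝ}
    (h : ∀ s ⊆ E, f s ≤ g s) : bexp E p f ≤ bexp E p g := by
  have : 0 ≤ 1 - p := by linarith
  exact Finset.sum_le_sum fun s hs =>
    mul_le_mul_of_nonneg_left (h s (Finset.mem_powerset.1 hs)) (by positivity)

/-- Retaining with probability `p₁` and then sprinkling with probability `p₂` amounts to
retaining with probability `1 - (1 - p₁) (1 - p₂)`. -/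
lemma bexp_sprinkle (E : Finset α) {p p₁ p₂ : ℝ} (hp : 1 - p = (1 - p₁) * (1 - p₂))
    (f : Finset α → ℝ) :
    bexp E p f = bexp E p₁ (fun s => bexp E p₂ (fun t => f (s ∪ t))) := by
  induction E using Finset.induction_on generalizing f with
  | empty => simp [bexp_empty]
  | insert e E he ih =>
    have h1 : bexp (insert e E) p₁ (fun s => bexp (insert e E) p₂ (fun t => f (s ∪ t)))
        = p₁ * bexp E p₁ (fun s => bexp E p₂ (fun t => f (insert e (s ∪ t))))
          + (1 - p₁) * (p₂ * bexp E p₁ (fun s => bexp E p₂ (fun t => f (insert e (s ∪ t))))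
            + (1 - p₂) * bexp E p₁ (fun s => bexp E p₂ (fun t => f (s ∪ t)))) := by
      rw [bexp_insert he]
      simp only [bexp_insert he, bexp_add, bexp_const_mul, Finset.insert_union,
        Finset.union_insert, Finset.insert_idem]
      ring
    rw [h1, bexp_insert he, ih, ih, show p = 1 - (1 - p₁) * (1 - p₂) by linarith]
    ring

/-- Functions depending on disjoint sets of elements are uncorrelated. -/
lemma bexp_mul_of_disjoint (E : Finset α) (p : ℝ) {A B : Set α} (hAB : Disjoint A B)
    (f g : Finset α → ℝ) (hf : ∀ s t : Finset α, (∀ e ∈ A, e ∈ s ↔ e ∈ t) → f s = f t)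
    (hg : ∀ s t : Finset α, (∀ e ∈ B, e ∈ s ↔ e ∈ t) → g s = g t) :
    bexp E p (fun s => f s * g s) = bexp E p f * bexp E p g := by
  induction E using Finset.induction_on generalizing f g with
  | empty => simp [bexp_empty]
  | insert e E he ih =>
    have key : ∀ (C : Set α) (h : Finset α → ℝ),
        (∀ s t : Finset α, (∀ e ∈ C, e ∈ s ↔ e ∈ t) → h s = h t) →
        (∀ s t : Finset α, (∀ e ∈ C, e ∈ s ↔ e ∈ t) → h (insert e s) = h (insert e t)) := by
      intro C h hh s t hst
      refine hh _ _ fun x hx => ?_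
      simp [hst x hx]
    have fresh : ∀ (C : Set α) (h : Finset α → ℝ), e ∉ C →
        (∀ s t : Finset α, (∀ e ∈ C, e ∈ s ↔ e ∈ t) → h s = h t) →
        (fun s => h (insert e s)) = h := by
      intro C h hC hh
      funext s
      refine hh _ _ fun x hx => ?_
      have : x ≠ e := fun hxe => hC (hxe ▸ hx)
      simp [this]
    rw [bexp_insert he, bexp_insert he, bexp_insert he, ih f g hf hg,
      ih (fun s => f (insert e s)) (fun s => g (insert e s)) (key A f hf) (key B g hg)]
    by_cases heA : e ∈ A
    · have heB : e ∉ B := Set.disjoint_left.1 hAB heA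
      rw [fresh B g heB hg]; ring
    · rw [fresh A f heA hf]; ring

lemma bexp_prod_of_disjoint {ι : Type*} (E : Finset α) (p : ℝ) (I : Finset ι) (A : ι → Set α)
    (hA : (I : Set ι).PairwiseDisjoint A) (f : ι → Finset α → ℝ)
    (hf : ∀ i ∈ I, ∀ s t : Finset α, (∀ e ∈ A i, e ∈ s ↔ e ∈ t) → f i s = f i t) :
    bexp E p (fun s => ∏ i ∈ I, f i s) = ∏ i ∈ I, bexp E p (f i) := by
  classical
  induction I using Finset.induction_on with
  | empty => simp [bexp_const]
  | insert i I hi ih =>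
    simp only [Finset.prod_insert hi]
    rw [bexp_mul_of_disjoint E p (A := A i) (B := ⋃ j ∈ I, A j), ih]
    · exact hA.subset (by simp)
    · exact fun j hj => hf j (Finset.mem_insert_of_mem hj)
    · refine Set.disjoint_iUnion₂_right.2 fun j hj => hA (by simp) (by simp [hj]) ?_
      rintro rfl; exact hi hj
    · exact hf i (Finset.mem_insert_self _ _)
    · intro s t hst
      refine Finset.prod_congr rfl fun j hj => hf j (Finset.mem_insert_of_mem hj) s t ?_
      exact fun e he => hst e (Set.mem_iUnion₂.2 ⟨j, hj, he⟩)

lemma bexp_mem {E : Finset α} {e : α} (he : e ∈ E) (p : ℝ) :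
    bexp E p (fun s => if e ∈ s then 1 else 0) = p := by
  have h := bexp_insert (Finset.notMem_erase e E) p (fun s => if e ∈ s then (1 : ℝ) else 0)
  rw [Finset.insert_erase he] at h
  have h0 : bexp (E.erase e) p (fun s => if e ∈ s then (1 : ℝ) else 0) = 0 := by
    refine (bexp_congr (g := fun _ => 0) fun s hs => if_neg fun hes => ?_).trans
      (bexp_const _ _ _)
    exact Finset.notMem_erase e E (hs hes)
  rw [h, h0]
  simp [bexp_const]

lemma bexp_subset {E Q : Finset α} (hQ : Q ⊆ E) (p : ℝ) :
    bexp E p (fun s => if Q ⊆ s then 1 else 0) = p ^ Q.card := by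
  have h : (fun s : Finset α => if Q ⊆ s then (1 : ℝ) else 0)
      = fun s => ∏ e ∈ Q, if e ∈ s then (1 : ℝ) else 0 := by
    funext s
    rw [Finset.prod_ite_zero]
    simp [Finset.subset_iff]
  rw [h, bexp_prod_of_disjoint E p Q (fun e => {e})]
  · rw [Finset.prod_congr rfl fun e he => bexp_mem (hQ he) p]
    simp
  · intro a _ b _ hab
    simpa using hab
  · intro e _ s t hst
    simp [hst e rfl]

/-- Two-point exponential moment bound. -/
lemma two_point_exp_le {p x y : ℝ} (h0 : 0 ≤ p) (h1 : p ≤ 1) {c : ℝ} (hc : c ≤ 1)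
    (hxy : |x - y| ≤ c) :
    p * Real.exp x + (1 - p) * Real.exp y ≤ Real.exp (p * x + (1 - p) * y + c ^ 2) := by
  have key : ∀ u : ℝ, |u| ≤ c → Real.exp u ≤ 1 + u + c ^ 2 := by
    intro u hu
    have h := Real.abs_exp_sub_one_sub_id_le (hu.trans hc)
    have h2 : u ^ 2 ≤ c ^ 2 := sq_le_sq' (abs_le.1 hu).1 (abs_le.1 hu).2
    linarith [(abs_le.1 h).2]
  set m := p * x + (1 - p) * y with hm
  have hx : |x - m| ≤ c := by
    have : x - m = (1 - p) * (x - y) := by rw [hm]; ring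
    rw [this, abs_mul, abs_of_nonneg (by linarith)]
    nlinarith [abs_nonneg (x - y)]
  have hy : |y - m| ≤ c := by
    have : y - m = p * (y - x) := by rw [hm]; ring
    rw [this, abs_mul, abs_of_nonneg h0, abs_sub_comm]
    nlinarith [abs_nonneg (x - y)]
  have ex : Real.exp x = Real.exp m * Real.exp (x - m) := by rw [← Real.exp_add]; ring_nf
  have ey : Real.exp y = Real.exp m * Real.exp (y - m) := by rw [← Real.exp_add]; ring_nf
  have hb : p * Real.exp (x - m) + (1 - p) * Real.exp (y - m) ≤ Real.exp (c ^ 2) := by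
    have e1 := mul_le_mul_of_nonneg_left (key _ hx) h0
    have e2 := mul_le_mul_of_nonneg_left (key _ hy) (by linarith : 0 ≤ 1 - p)
    have e3 : p * (1 + (x - m) + c ^ 2) + (1 - p) * (1 + (y - m) + c ^ 2) = c ^ 2 + 1 := by
      rw [hm]; ring
    linarith [Real.add_one_le_exp (c ^ 2)]
  rw [Real.exp_add, ex, ey]
  nlinarith [mul_le_mul_of_nonneg_left hb (Real.exp_pos m).le]

lemma bexp_exp_le (E : Finset α) {p : ℝ} (h0 : 0 ≤ p) (h1 : p ≤ 1) {c : ℝ} (hc : c ≤ 1)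
    (f : Finset α → ℝ) (hf : ∀ e s, |f (insert e s) - f s| ≤ c) :
    bexp E p (fun s => Real.exp (f s)) ≤ Real.exp (bexp E p f + E.card * c ^ 2) := by
  induction E using Finset.induction_on generalizing f with
  | empty => simp [bexp_empty]
  | insert e E he ih =>
    have hfe : ∀ e' s, |f (insert e (insert e' s)) - f (insert e s)| ≤ c := by
      intro e' s
      rw [Finset.insert_comm]
      exact hf _ _
    rw [bexp_insert he, bexp_insert he, Finset.card_insert_of_notMem he]
    set x := bexp E p (fun s => f (insert e s))
    set y := bexp E p f
    have hxy : |x - y| ≤ c := by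
      have hadd := bexp_add E p f (fun _ => c)
      have hadd' := bexp_add E p (fun s => f (insert e s)) (fun _ => c)
      rw [bexp_const] at hadd hadd'
      have m1 : x ≤ y + c := by
        rw [← hadd]
        exact bexp_mono h0 h1 fun s _ => by linarith [(abs_le.1 (hf e s)).2]
      have m2 : y ≤ x + c := by
        rw [← hadd']
        exact bexp_mono h0 h1 fun s _ => by linarith [(abs_le.1 (hf e s)).1]
      exact abs_le.2 ⟨by linarith, by linarith⟩
    have i1 := mul_le_mul_of_nonneg_left (ih (fun s => f (insert e s)) hfe) h0
    have i2 := mul_le_mul_of_nonneg_left (ih f hf) (by linarith : 0 ≤ 1 - p)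
    refine (add_le_add i1 i2).trans ?_
    have h2 := two_point_exp_le h0 h1 hc (x := x + E.card * c ^ 2) (y := y + E.card * c ^ 2)
      (by simpa using hxy)
    refine h2.trans (le_of_eq ?_)
    congr 1
    push_cast
    ring

/-- Bounded-difference upper tail. -/
lemma bexp_upper_tail (E : Finset α) {p : ℝ} (h0 : 0 ≤ p) (h1 : p ≤ 1) {c l a : ℝ}
    (hl : 0 ≤ l) (hc : l * c ≤ 1) (f : Finset α → ℝ)
    (hf : ∀ e s, |f (insert e s) - f s| ≤ c) :
    bexp E p (fun s => if bexp E p f + a ≤ f s then 1 else 0)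
      ≤ Real.exp (E.card * (l * c) ^ 2 - l * a) := by
  have h := bexp_exp_le E h0 h1 hc (fun s => l * f s) (by
    intro e s
    rw [← mul_sub, abs_mul, abs_of_nonneg hl]
    exact mul_le_mul_of_nonneg_left (hf e s) hl)
  rw [bexp_const_mul] at h
  have h' : bexp E p (fun s => if bexp E p f + a ≤ f s then 1 else 0)
      ≤ bexp E p (fun s => Real.exp (-(l * (bexp E p f + a))) * Real.exp (l * f s)) := by
    refine bexp_mono h0 h1 fun s _ => ?_
    rw [← Real.exp_add]
    split_ifs with hs
    · rw [Real.one_le_exp_iff]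
      nlinarith
    · positivity
  rw [bexp_const_mul] at h'
  refine h'.trans ((mul_le_mul_of_nonneg_left h (Real.exp_pos _).le).trans (le_of_eq ?_))
  rw [← Real.exp_add]
  congr 1
  ring

/-- Bounded-difference lower tail. -/
lemma bexp_lower_tail (E : Finset α) {p : ℝ} (h0 : 0 ≤ p) (h1 : p ≤ 1) {c l a : ℝ}
    (hl : 0 ≤ l) (hc : l * c ≤ 1) (f : Finset α → ℝ)
    (hf : ∀ e s, |f (insert e s) - f s| ≤ c) :
    bexp E p (fun s => if f s ≤ bexp E p f - a then 1 else 0)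
      ≤ Real.exp (E.card * (l * c) ^ 2 - l * a) := by
  have hneg : bexp E p (fun s => -f s) = -bexp E p f := by
    simpa using bexp_const_mul E p (-1) f
  have h := bexp_upper_tail E h0 h1 (a := a) hl hc (fun s => -f s) (by
    intro e s
    rw [neg_sub_neg, abs_sub_comm]
    exact hf e s)
  refine le_trans (le_of_eq (bexp_congr fun s _ => ?_)) h
  rw [hneg]
  have : f s ≤ bexp E p f - a ↔ -bexp E p f + a ≤ -f s := by
    constructor <;> intro <;> linarith
  simp only [this]

end Bernoulli

/-- Probability that the `m`-ary tree has an open path of length `k` from the root. -/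
def treeSurv (m : ℕ) (p : ℝ) : ℕ → ℝ
  | 0 => 1
  | k + 1 => 1 - (1 - p * treeSurv m p k) ^ m

lemma treeSurv_mem {m : ℕ} {p : ℝ} (h0 : 0 ≤ p) (h1 : p ≤ 1) (k : ℕ) :
    0 ≤ treeSurv m p k ∧ treeSurv m p k ≤ 1 := by
  induction k with
  | zero => simp [treeSurv]
  | succ k ih =>
    have a : 0 ≤ 1 - p * treeSurv m p k := by nlinarith
    have b : 1 - p * treeSurv m p k ≤ 1 := by nlinarith
    have c := pow_le_one₀ a b (n := m)
    have d := pow_nonneg a m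
    simp only [treeSurv]
    constructor <;> linarith

/-- `1 - (1 - x) ^ m = x * ∑ i < m, (1 - x) ^ i`. -/
lemma one_sub_one_sub_pow (m : ℕ) (x : ℝ) :
    1 - (1 - x) ^ m = x * ∑ i ∈ Finset.range m, (1 - x) ^ i := by
  have h := geom_sum_mul (1 - x) m
  linear_combination h

lemma exists_treeSurv_lower_bound {m : ℕ} {p : ℝ} (h0 : 0 < p) (h1 : p ≤ 1)
    (hmp : 1 < m * p) : ∃ σ > (0 : ℝ), σ ≤ 1 ∧ ∀ k, σ ≤ treeSurv m p k := by
  have hcont : Filter.Tendsto (fun x : ℝ => p * ∑ i ∈ Finset.range m, (1 - p * x) ^ i)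
      (nhds 0) (nhds (p * ∑ i ∈ Finset.range m, (1 - p * 0) ^ i)) :=
    Continuous.tendsto (by fun_prop) 0
  have hlim : 1 < p * ∑ i ∈ Finset.range m, (1 - p * (0 : ℝ)) ^ i := by
    simpa [mul_comm] using hmp
  have hev := (hcont.eventually (lt_mem_nhds hlim)).filter_mono
    (nhdsWithin_le_nhds (s := Set.Ioi 0))
  have hev2 : ∀ᶠ x : ℝ in nhdsWithin 0 (Set.Ioi 0), x ∈ Set.Ioc (0 : ℝ) 1 :=
    Ioc_mem_nhdsGT one_pos
  obtain ⟨σ, hσ, hσ0, hσ1⟩ := (hev.and hev2).exists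
  refine ⟨σ, hσ0, hσ1, fun k => ?_⟩
  induction k with
  | zero => exact hσ1
  | succ k ih =>
    have hk := treeSurv_mem (m := m) h0.le h1 k
    have hb : (1 - p * treeSurv m p k) ^ m ≤ (1 - p * σ) ^ m := by
      apply pow_le_pow_left₀ <;> nlinarith
    have hs := one_sub_one_sub_pow m (p * σ)
    simp only [treeSurv]
    nlinarith

lemma treeSurv_ratio {m : ℕ} (hm : 2 ≤ m) {p σ r t : ℝ} (h0 : 0 < p) (h1 : p ≤ 1)
    (hσ0 : 0 < σ) (hσ : ∀ k, σ ≤ treeSurv m p k) (ht0 : 0 < t) (ht1 : t ≤ 1)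
    (hr0 : 0 < r) (hr1 : r ≤ 1) (hr : 1 ≤ r * (1 + p * σ * (1 - t) / m)) (k : ℕ) :
    t * treeSurv m p k ≤ treeSurv m (r * p) k := by
  induction k with
  | zero => simpa [treeSurv] using ht1
  | succ k ih =>
    set s := treeSurv m p k with hs
    have hsm := treeSurv_mem (m := m) h0.le h1 k
    have hsσ := hσ k
    have hrp : r * p ≤ 1 := by nlinarith
    have hs1 := treeSurv_mem (m := m) (by positivity : 0 ≤ r * p) hrp k
    rw [← hs] at hsm hsσ
    have hm0 : (0 : ℝ) < m := by positivity
    set x := p * (r * t * s) with hx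
    have hspos : 0 < s := by linarith
    have hrt : r * t ≤ 1 := by nlinarith
    have hxs : x ≤ p * s := by
      have : r * t * s ≤ s := by nlinarith
      exact mul_le_mul_of_nonneg_left this h0.le
    have hps : p * s ≤ 1 := by nlinarith
    have hx0 : 0 ≤ x := by positivity
    -- monotonicity of the recursion
    have mono : (1 - r * p * treeSurv m (r * p) k) ^ m ≤ (1 - x) ^ m := by
      apply pow_le_pow_left₀
      · nlinarith
      · have : r * p * (t * s) ≤ r * p * treeSurv m (r * p) k :=
          mul_le_mul_of_nonneg_left ih (by positivity)
        rw [hx]; nlinarith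
    have e1 := one_sub_one_sub_pow m x
    have e2 := one_sub_one_sub_pow m (p * s)
    set A := ∑ i ∈ Finset.range m, (1 - x) ^ i with hA
    set B := ∑ i ∈ Finset.range m, (1 - p * s) ^ i with hB
    have hBm : B ≤ m := by
      calc B ≤ ∑ _i ∈ Finset.range m, (1 : ℝ) :=
            Finset.sum_le_sum fun i _ => pow_le_one₀ (by linarith) (by nlinarith)
        _ = m := by simp
    have hB0 : 0 ≤ B := Finset.sum_nonneg fun i _ => pow_nonneg (by linarith) i
    have hAB : p * s * (1 - t) ≤ A - B := by
      rw [hA, hB, ← Finset.sum_sub_distrib]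
      have hle : (1 - x) ^ 1 - (1 - p * s) ^ 1
          ≤ ∑ i ∈ Finset.range m, ((1 - x) ^ i - (1 - p * s) ^ i) := by
        refine Finset.single_le_sum (f := fun i => (1 - x) ^ i - (1 - p * s) ^ i)
          (fun i _ => ?_) (Finset.mem_range.2 (by omega))
        exact sub_nonneg.2 (pow_le_pow_left₀ (by linarith) (by linarith) i)
      refine le_trans ?_ hle
      have : r * t * (p * s) ≤ t * (p * s) := by
        have : r * t ≤ t := by nlinarith
        exact mul_le_mul_of_nonneg_right this (by positivity)
      rw [hx]; nlinarith
    have hrA : B ≤ r * A := by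
      have h2 : B * (1 + p * σ * (1 - t) / m) ≤ A := by
        have : B * (p * σ * (1 - t) / m) ≤ p * σ * (1 - t) := by
          have hq : 0 ≤ p * σ * (1 - t) := mul_nonneg (by positivity) (by linarith)
          rw [mul_div_assoc', div_le_iff₀ hm0]
          nlinarith
        have : p * σ * (1 - t) ≤ p * s * (1 - t) :=
          mul_le_mul_of_nonneg_right (mul_le_mul_of_nonneg_left hsσ h0.le) (by linarith)
        linarith
      calc B = B * 1 := (mul_one B).symm
        _ ≤ B * (r * (1 + p * σ * (1 - t) / m)) := mul_le_mul_of_nonneg_left hr hB0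
        _ = r * (B * (1 + p * σ * (1 - t) / m)) := by ring
        _ ≤ r * A := mul_le_mul_of_nonneg_left h2 hr0.le
    simp only [treeSurv]
    rw [← hs, e2]
    have h3 : t * (p * s * B) ≤ t * (p * s * (r * A)) :=
      mul_le_mul_of_nonneg_left (mul_le_mul_of_nonneg_left hrA (by positivity)) ht0.le
    have h4 : t * (p * s * (r * A)) = x * A := by rw [hx]; ring
    linarith

/-- Probability that the `d`-regular tree has an open path of length `k + 1` from the root. -/
def rootSurv (d : ℕ) (p : ℝ) (k : ℕ) : ℝ := 1 - (1 - p * treeSurv (d - 1) p k) ^ d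

/-- Left continuity of the survival probability, uniformly in the depth. -/
lemma exists_rootSurv_close {d : ℕ} (hd : 3 ≤ d) {p : ℝ} (hp : 1 / ((d : ℝ) - 1) < p)
    (hp1 : p < 1) : ∃ w > (0 : ℝ), ∀ ε > (0 : ℝ), ∃ p₁, 0 < p₁ ∧ p₁ < p ∧
      ∀ k, w ≤ rootSurv d p₁ k ∧ rootSurv d p k ≤ rootSurv d p₁ k + ε := by
  have hd' : (3 : ℝ) ≤ d := by exact_mod_cast hd
  have h0 : 0 < p := lt_trans (by apply one_div_pos.2; linarith) hp
  have hcast : ((d - 1 : ℕ) : ℝ) = d - 1 := by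
    rw [Nat.cast_sub (by omega)]; simp
  have hmp : 1 < ((d - 1 : ℕ) : ℝ) * p := by
    rw [hcast]
    rw [div_lt_iff₀ (by linarith)] at hp
    linarith
  obtain ⟨σ, hσ0, hσ1, hσ⟩ := exists_treeSurv_lower_bound h0 hp1.le hmp
  refine ⟨p * σ / 4, by positivity, fun ε hε => ?_⟩
  set u : ℝ := min (1 / 2) (ε / (2 * d)) with hu
  have hu0 : 0 < u := lt_min (by norm_num) (by positivity)
  have hu1 : u ≤ 1 / 2 := min_le_left _ _
  have hu2 : u * (2 * d) ≤ ε := by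
    rw [← le_div_iff₀ (by positivity)]; exact min_le_right _ _
  set y : ℝ := p * σ * u / (d - 1 : ℕ) with hy
  have hm0 : (0 : ℝ) < (d - 1 : ℕ) := by rw [hcast]; linarith
  have hy0 : 0 < y := by positivity
  have hyu : y ≤ u := by
    rw [hy, div_le_iff₀ hm0, hcast]
    have : p * σ ≤ 1 := by nlinarith
    nlinarith
  set r : ℝ := (1 + y)⁻¹ with hr
  have hr0 : 0 < r := by positivity
  have hry : r * (1 + y) = 1 := inv_mul_cancel₀ (by positivity)
  have hr1 : r < 1 := by nlinarith
  have hr2 : 1 - u ≤ r := by nlinarith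
  have key := treeSurv_ratio (m := d - 1) (by omega) h0 hp1.le hσ0 hσ
    (t := 1 - u) (by linarith) (by linarith) hr0 hr1.le
    (by rw [show p * σ * (1 - (1 - u)) / ((d - 1 : ℕ) : ℝ) = y by rw [hy]; ring]; exact hry.ge)
  refine ⟨r * p, by positivity, by nlinarith, fun k => ?_⟩
  have hrp1 : r * p ≤ 1 := by nlinarith
  have hs := treeSurv_mem (m := d - 1) h0.le hp1.le k
  have hs1 := treeSurv_mem (m := d - 1) (by positivity : 0 ≤ r * p) hrp1 k
  have hk := key k
  have hσk := hσ k
  set s := treeSurv (d - 1) p k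
  set s₁ := treeSurv (d - 1) (r * p) k
  have hprod : (1 / 2) * σ ≤ s₁ :=
    (mul_le_mul (by linarith) hσk hσ0.le (by linarith)).trans hk
  have hps1 : r * p * s₁ ≤ 1 := mul_le_one₀ hrp1 hs1.1 hs1.2
  have hps10 : 0 ≤ r * p * s₁ := mul_nonneg (by positivity) hs1.1
  constructor
  · have h2 : (1 - r * p * s₁) ^ d ≤ (1 - r * p * s₁) ^ 1 :=
      pow_le_pow_of_le_one (by linarith) (by linarith) (by omega)
    have h3 : p * σ / 4 ≤ r * p * s₁ := by
      have h4 : 1 / 2 * p ≤ r * p := mul_le_mul_of_nonneg_right (by linarith) h0.le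
      have h5 := mul_le_mul h4 hprod (by positivity) (by positivity)
      linarith
    unfold rootSurv
    change p * σ / 4 ≤ 1 - (1 - r * p * s₁) ^ d
    linarith
  · unfold rootSurv
    change 1 - (1 - p * s) ^ d ≤ 1 - (1 - r * p * s₁) ^ d + ε
    have hps : p * s ≤ 1 := by nlinarith
    have hps0 : 0 ≤ p * s := mul_nonneg h0.le hs.1
    have hgap : p * s - r * p * s₁ ≤ 2 * u := by
      have h1 : (1 - u) * (1 - u) * (p * s) ≤ r * p * s₁ := by
        have : (1 - u) * s * ((1 - u) * p) ≤ s₁ * (r * p) :=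
          mul_le_mul hk (mul_le_mul_of_nonneg_right hr2 h0.le)
            (mul_nonneg (by linarith) h0.le) hs1.1
        linarith
      have h2 : u * (p * s) ≤ u * 1 := mul_le_mul_of_nonneg_left hps hu0.le
      have h3 : 0 ≤ u * u * (p * s) := by positivity
      linarith
    by_cases hc : p * s ≤ r * p * s₁
    · have : (1 - r * p * s₁) ^ d ≤ (1 - p * s) ^ d :=
        pow_le_pow_left₀ (by linarith) (by linarith) d
      linarith
    · push Not at hc
      have hgeom : (1 - r * p * s₁) ^ d - (1 - p * s) ^ d
          ≤ d * ((1 - r * p * s₁) - (1 - p * s)) := by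
        have h := (Commute.all (1 - r * p * s₁) (1 - p * s)).geom_sum₂_mul d
        rw [← h]
        refine mul_le_mul_of_nonneg_right ?_ (by linarith)
        calc _ ≤ ∑ _i ∈ Finset.range d, (1 : ℝ) := by
              refine Finset.sum_le_sum fun i _ => ?_
              exact mul_le_one₀ (pow_le_one₀ (by linarith) (by linarith))
                (pow_nonneg (by linarith) _) (pow_le_one₀ (by linarith) (by linarith))
          _ = d := by simp
      have h3 := mul_le_mul_of_nonneg_left hgap (by linarith : (0 : ℝ) ≤ d)
      linarith

section Exploration

variable (G : SimpleGraph V)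

/-- There is a non-backtracking walk of `k` further steps after the step from `u` to `v`, all of
whose edges lie in `s`. -/
def Reach (s : Finset (Sym2 V)) : ℕ → V → V → Prop
  | 0, _, _ => True
  | k + 1, u, v => ∃ w, (G.Adj v w ∧ w ≠ u) ∧ s(v, w) ∈ s ∧ Reach s k v w

/-- There is a non-backtracking walk of length `k + 1` from `v` with all edges in `s`. -/
def RootReach (s : Finset (Sym2 V)) (k : ℕ) (v : V) : Prop :=
  ∃ w, G.Adj v w ∧ s(v, w) ∈ s ∧ Reach G s k v w

/-- The edges that `Reach` may inspect. -/
def reachSupp : ℕ → V → V → Set (Sym2 V)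
  | 0, _, _ => ∅
  | k + 1, u, v => {e | ∃ w, (G.Adj v w ∧ w ≠ u) ∧ (e = s(v, w) ∨ e ∈ reachSupp k v w)}

variable {G}

lemma reach_congr {s t : Finset (Sym2 V)} (k : ℕ) (u v : V)
    (h : ∀ e ∈ reachSupp G k u v, e ∈ s ↔ e ∈ t) : Reach G s k u v ↔ Reach G t k u v := by
  induction k generalizing u v with
  | zero => simp [Reach]
  | succ k ih =>
    simp only [Reach]
    refine exists_congr fun w => and_congr_right fun hw => ?_
    rw [h _ ⟨w, hw, Or.inl rfl⟩, ih v w fun e he => h e ⟨w, hw, Or.inr he⟩]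

lemma reach_mono {s t : Finset (Sym2 V)} (hst : s ⊆ t) (k : ℕ) (u v : V)
    (h : Reach G s k u v) : Reach G t k u v := by
  induction k generalizing u v with
  | zero => trivial
  | succ k ih =>
    obtain ⟨w, hw, he, hr⟩ := h
    exact ⟨w, hw, hst he, ih v w hr⟩

lemma rootReach_mono {s t : Finset (Sym2 V)} (hst : s ⊆ t) {k : ℕ} {v : V}
    (h : RootReach G s k v) : RootReach G t k v := by
  obtain ⟨w, hw, he, hr⟩ := h
  exact ⟨w, hw, hst he, reach_mono hst k v w hr⟩

lemma exists_walk_of_mem_reachSupp {k : ℕ} {u v : V} (h : G.Adj u v) {e : Sym2 V}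
    (he : e ∈ reachSupp G k u v) : ∃ y, ∃ q : G.Walk v y,
      (SimpleGraph.Walk.cons h q).edges.IsChain (· ≠ ·) ∧ q.length ≤ k ∧ 1 ≤ q.length ∧
      e ∈ q.edges ∧ y ∈ e := by
  induction k generalizing u v with
  | zero => exact absurd he (Set.notMem_empty e)
  | succ k ih =>
    obtain ⟨w, ⟨hvw, hwu⟩, hcase⟩ := he
    have hne : s(u, v) ≠ s(v, w) := by
      intro h'
      rcases Sym2.eq_iff.1 h' with ⟨h1, _⟩ | ⟨h1, _⟩
      · exact h.ne h1
      · exact hwu h1.symm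
    rcases hcase with rfl | he
    · exact ⟨w, .cons hvw .nil, by simp [hne], by simp, by simp, by simp, by simp⟩
    · obtain ⟨y, q, hq, hl, hl1, heq, hy⟩ := ih hvw he
      refine ⟨y, .cons hvw q, ?_, by simpa using hl, by simp, by simp [heq], hy⟩
      simp only [SimpleGraph.Walk.edges_cons, List.isChain_cons_cons] at hq ⊢
      exact ⟨hne, hq⟩

lemma exists_walk_of_mem_branch {k : ℕ} {u v : V} (h : G.Adj u v) {e : Sym2 V}
    (he : e ∈ insert s(u, v) (reachSupp G k u v)) : ∃ y, ∃ q : G.Walk v y,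
      (SimpleGraph.Walk.cons h q).edges.IsChain (· ≠ ·) ∧ q.length ≤ k ∧
      e ∈ (SimpleGraph.Walk.cons h q).edges ∧ y ∈ e := by
  rcases he with rfl | he
  · exact ⟨v, .nil, by simp, by simp, by simp, by simp⟩
  · obtain ⟨y, q, h1, h2, _, h3, h4⟩ := exists_walk_of_mem_reachSupp h he
    exact ⟨y, q, h1, h2, by simp [h3], h4⟩

lemma isAcyclic_fromEdgeSet_of_card_le {R : ℕ}
    (hg : ∀ (a : V) (c : G.Walk a a), c.IsCycle → R < c.length)
    (F : Finset (Sym2 V)) (hF : (F : Set (Sym2 V)) ⊆ G.edgeSet) (hcard : F.card ≤ R) :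
    (SimpleGraph.fromEdgeSet (F : Set (Sym2 V))).IsAcyclic := by
  intro a c hc
  have hle : SimpleGraph.fromEdgeSet (F : Set (Sym2 V)) ≤ G := by
    rw [← SimpleGraph.edgeSet_subset_edgeSet, SimpleGraph.edgeSet_fromEdgeSet]
    exact Set.sdiff_subset.trans hF
  have h1 := hg a _ (hc.mapLe hle)
  have h2 : c.edges.toFinset ⊆ F := by
    intro e he
    have h3 := c.edges_subset_edgeSet (List.mem_toFinset.1 he)
    rw [SimpleGraph.edgeSet_fromEdgeSet] at h3
    exact_mod_cast h3.1
  have h3 := Finset.card_le_card h2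
  rw [List.toFinset_card_of_nodup hc.edges_nodup, SimpleGraph.Walk.length_edges] at h3
  simp only [SimpleGraph.Walk.length_map] at h1
  omega

lemma walk_mem_edgeSet_fromEdgeSet {v x : V} (p : G.Walk v x) {F : Finset (Sym2 V)}
    (hF : ∀ e ∈ p.edges, e ∈ F) :
    ∀ e ∈ p.edges, e ∈ (SimpleGraph.fromEdgeSet (F : Set (Sym2 V))).edgeSet := by
  intro e he
  rw [SimpleGraph.edgeSet_fromEdgeSet]
  exact ⟨hF e he, G.not_isDiag_of_mem_edgeSet (p.edges_subset_edgeSet he)⟩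

/-- Below half the girth, a non-backtracking walk from a given vertex is determined by its last
edge. -/
lemma support_eq_of_last_edge {R K : ℕ}
    (hg : ∀ (a : V) (c : G.Walk a a), c.IsCycle → R < c.length) (hK : 2 * K ≤ R)
    {v x y : V} (p : G.Walk v x) (q : G.Walk v y) (hp : p.edges.IsChain (· ≠ ·))
    (hq : q.edges.IsChain (· ≠ ·)) (hpl : p.length ≤ K) (hql : q.length ≤ K) {e : Sym2 V}
    (hep : e ∈ p.edges) (hx : x ∈ e) (heq : e ∈ q.edges) (hy : y ∈ e) :
    p.support = q.support := by
  set F : Finset (Sym2 V) := p.edges.toFinset ∪ q.edges.toFinset with hFdef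
  have hpF : ∀ e ∈ p.edges, e ∈ F := fun e he => by simp [F, he]
  have hqF : ∀ e ∈ q.edges, e ∈ F := fun e he => by simp [F, he]
  have hac : (SimpleGraph.fromEdgeSet (F : Set (Sym2 V))).IsAcyclic := by
    refine isAcyclic_fromEdgeSet_of_card_le hg F ?_ ?_
    · intro e he
      rcases Finset.mem_union.1 (Finset.mem_coe.1 he) with h | h
      · exact p.edges_subset_edgeSet (List.mem_toFinset.1 h)
      · exact q.edges_subset_edgeSet (List.mem_toFinset.1 h)
    · refine (Finset.card_union_le _ _).trans ?_
      have h1 := p.edges.toFinset_card_le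
      have h2 := q.edges.toFinset_card_le
      rw [SimpleGraph.Walk.length_edges] at h1 h2
      omega
  set p' := p.transfer _ (walk_mem_edgeSet_fromEdgeSet p hpF) with hp'
  set q' := q.transfer _ (walk_mem_edgeSet_fromEdgeSet q hqF) with hq'
  have hpp : p'.IsPath := by
    rw [hac.isPath_iff_isChain, hp', SimpleGraph.Walk.edges_transfer]; exact hp
  have hqp : q'.IsPath := by
    rw [hac.isPath_iff_isChain, hq', SimpleGraph.Walk.edges_transfer]; exact hq
  have hps : p'.support = p.support := SimpleGraph.Walk.support_transfer _ _
  have hqs : q'.support = q.support := SimpleGraph.Walk.support_transfer _ _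
  by_cases hxy : x = y
  · subst hxy
    have := (hac.subsingleton_path _ _).elim ⟨p', hpp⟩ ⟨q', hqp⟩
    rw [← hps, ← hqs, Subtype.mk.inj this]
  · exfalso
    have hexy : e = s(x, y) := (Sym2.mem_and_mem_iff hxy).1 ⟨hx, hy⟩
    subst hexy
    have hyp : y ∈ p'.support := hps ▸ p.snd_mem_support_of_mem_edges hep
    have hxq : x ∈ q'.support := hqs ▸ q.fst_mem_support_of_mem_edges heq
    have h1 := (hac.subsingleton_path _ _).elim ⟨p'.takeUntil y hyp, hpp.takeUntil hyp⟩ ⟨q', hqp⟩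
    have h2 := (hac.subsingleton_path _ _).elim ⟨q'.takeUntil x hxq, hqp.takeUntil hxq⟩ ⟨p', hpp⟩
    have l1 := SimpleGraph.Walk.length_takeUntil_lt_length hyp (Ne.symm hxy)
    have l2 := SimpleGraph.Walk.length_takeUntil_lt_length hxq hxy
    rw [Subtype.mk.inj h1] at l1
    rw [Subtype.mk.inj h2] at l2
    omega

lemma disjoint_branch {R k : ℕ}
    (hg : ∀ (a : V) (c : G.Walk a a), c.IsCycle → R < c.length) (hK : 2 * (k + 1) ≤ R)
    {v w w' : V} (h : G.Adj v w) (h' : G.Adj v w') (hne : w ≠ w') :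
    Disjoint (insert s(v, w) (reachSupp G k v w)) (insert s(v, w') (reachSupp G k v w')) := by
  rw [Set.disjoint_left]
  intro e he he'
  obtain ⟨y, q, h1, h2, h3, h4⟩ := exists_walk_of_mem_branch h he
  obtain ⟨y', q', h1', h2', h3', h4'⟩ := exists_walk_of_mem_branch h' he'
  have := support_eq_of_last_edge hg hK _ _ h1 h1' (by simpa using h2) (by simpa using h2')
    h3 h4 h3' h4'
  rw [SimpleGraph.Walk.support_cons, SimpleGraph.Walk.support_cons,
    ← SimpleGraph.Walk.cons_tail_support q, ← SimpleGraph.Walk.cons_tail_support q'] at this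
  simp only [List.cons.injEq, true_and] at this
  exact hne this.1

lemma edge_notMem_reachSupp {R k : ℕ}
    (hg : ∀ (a : V) (c : G.Walk a a), c.IsCycle → R < c.length) (hK : 2 * (k + 1) ≤ R)
    {v w : V} (h : G.Adj v w) : s(v, w) ∉ reachSupp G k v w := by
  intro he
  obtain ⟨y, q, h1, h2, h3, h4, h5⟩ := exists_walk_of_mem_reachSupp h he
  have := support_eq_of_last_edge hg hK (.cons h .nil) (.cons h q) (by simp) h1 (by simp)
    (by simpa using h2) (e := s(v, w)) (by simp) (by simp) (by simp) h5
  have := congrArg List.length this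
  simp only [SimpleGraph.Walk.length_support, SimpleGraph.Walk.length_cons,
    SimpleGraph.Walk.length_nil] at this
  omega

lemma mem_edgeFinset' {e : Sym2 V} : e ∈ edgeFinset' G ↔ e ∈ G.edgeSet := by
  simp [edgeFinset']

lemma bexp_exists_reach {R k : ℕ}
    (hg : ∀ (a : V) (c : G.Walk a a), c.IsCycle → R < c.length) (hK : 2 * (k + 1) ≤ R)
    (p τ : ℝ) (v : V) (N : Finset V) (hN : ∀ w ∈ N, G.Adj v w)
    (hτ : ∀ w ∈ N, bexp (edgeFinset' G) p (fun s => if Reach G s k v w then 1 else 0) = τ) :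
    bexp (edgeFinset' G) p
      (fun s => if ∃ w, w ∈ N ∧ s(v, w) ∈ s ∧ Reach G s k v w then 1 else 0)
      = 1 - (1 - p * τ) ^ N.card := by
  have h1 : (fun s : Finset (Sym2 V) =>
      if ∃ w, w ∈ N ∧ s(v, w) ∈ s ∧ Reach G s k v w then (1 : ℝ) else 0)
      = fun s => 1 - ∏ w ∈ N, (1 - (if s(v, w) ∈ s then 1 else 0) *
        (if Reach G s k v w then 1 else 0)) := by
    funext s
    split_ifs with h
    · obtain ⟨w, hw, h2, h3⟩ := h
      rw [Finset.prod_eq_zero hw (by simp [h2, h3])]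
      simp
    · rw [Finset.prod_eq_one, sub_self]
      intro w hw
      by_cases h2 : s(v, w) ∈ s
      · have h3 : ¬ Reach G s k v w := fun h3 => h ⟨w, hw, h2, h3⟩
        simp [h3]
      · simp [h2]
  rw [h1, bexp_one_sub, bexp_prod_of_disjoint _ p N
    (fun w => insert s(v, w) (reachSupp G k v w))]
  · rw [Finset.prod_congr rfl (g := fun _ => 1 - p * τ), Finset.prod_const]
    intro w hw
    rw [bexp_one_sub, bexp_mul_of_disjoint _ p (A := {s(v, w)}) (B := reachSupp G k v w),
      bexp_mem (mem_edgeFinset'.2 (hN w hw)), hτ w hw]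
    · exact Set.disjoint_singleton_left.2 (edge_notMem_reachSupp hg hK (hN w hw))
    · intro s t hst
      simp [hst _ rfl]
    · intro s t hst
      simp only [reach_congr k v w hst]
  · intro w hw w' hw' hne
    exact disjoint_branch hg hK (hN w hw) (hN w' hw') hne
  · intro w _ s t hst
    simp only [hst _ (Set.mem_insert _ _),
      reach_congr k v w fun e he => hst e (Set.mem_insert_of_mem _ he)]

variable {d : ℕ}

lemma card_filter_adj (hd : ∀ v, (G.neighborSet v).ncard = d) (v : V) :
    (Finset.univ.filter (fun w => G.Adj v w)).card = d := by
  rw [← hd v, Set.ncard_eq_toFinset_card']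
  congr 1
  ext w
  simp

lemma bexp_reach {R k : ℕ} (hd : ∀ v, (G.neighborSet v).ncard = d)
    (hg : ∀ (a : V) (c : G.Walk a a), c.IsCycle → R < c.length) (hK : 2 * k ≤ R)
    (p : ℝ) {u v : V} (huv : G.Adj u v) :
    bexp (edgeFinset' G) p (fun s => if Reach G s k u v then 1 else 0)
      = treeSurv (d - 1) p k := by
  induction k generalizing u v with
  | zero => simp [Reach, treeSurv, bexp_const]
  | succ k ih =>
    have h := bexp_exists_reach hg hK p (treeSurv (d - 1) p k) v
      ((Finset.univ.filter (fun w => G.Adj v w)).erase u) (by simp)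
      (fun w hw => ih (by omega) (by simpa using (Finset.mem_erase.1 hw).2))
    rw [Finset.card_erase_of_mem (by simpa using huv.symm), card_filter_adj hd] at h
    rw [treeSurv, ← h]
    refine bexp_congr fun s _ => ?_
    simp only [Reach, Finset.mem_erase, Finset.mem_filter, Finset.mem_univ, true_and,
      and_comm (a := G.Adj _ _)]

lemma bexp_rootReach {R k : ℕ} (hd : ∀ v, (G.neighborSet v).ncard = d)
    (hg : ∀ (a : V) (c : G.Walk a a), c.IsCycle → R < c.length) (hK : 2 * (k + 1) ≤ R)
    (p : ℝ) (v : V) :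
    bexp (edgeFinset' G) p (fun s => if RootReach G s k v then 1 else 0) = rootSurv d p k := by
  have h := bexp_exists_reach hg hK p (treeSurv (d - 1) p k) v
    (Finset.univ.filter (fun w => G.Adj v w)) (by simp)
    (fun w hw => bexp_reach hd hg (by omega) p (by simpa using hw))
  rw [card_filter_adj hd] at h
  rw [rootSurv, ← h]
  exact bexp_congr fun s _ => if_congr (by simp [RootReach]) rfl rfl

end Exploration

section Balls

/-- The vertices within distance `k` of `v` in `H`. -/
def ball (H : SimpleGraph V) (k : ℕ) (v : V) : Finset V :=
  Finset.univ.filter (fun y => ∃ w : H.Walk v y, w.length ≤ k)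

variable {G H : SimpleGraph V}

lemma mem_ball {k : ℕ} {v y : V} : y ∈ ball H k v ↔ ∃ w : H.Walk v y, w.length ≤ k := by
  simp [ball]

lemma mem_ball_self (k : ℕ) (v : V) : v ∈ ball H k v := mem_ball.2 ⟨.nil, by simp⟩

lemma mem_ball_symm {k : ℕ} {v y : V} (h : y ∈ ball H k v) : v ∈ ball H k y := by
  obtain ⟨w, hw⟩ := mem_ball.1 h
  exact mem_ball.2 ⟨w.reverse, by simpa using hw⟩

lemma mem_ball_trans {j k : ℕ} {x y z : V} (h : y ∈ ball H j x) (h' : z ∈ ball H k y) :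
    z ∈ ball H (j + k) x := by
  obtain ⟨w, hw⟩ := mem_ball.1 h
  obtain ⟨w', hw'⟩ := mem_ball.1 h'
  exact mem_ball.2 ⟨w.append w', by rw [SimpleGraph.Walk.length_append]; omega⟩

lemma ball_mono_radius {j k : ℕ} (h : j ≤ k) (v : V) : ball H j v ⊆ ball H k v := by
  intro y hy
  obtain ⟨w, hw⟩ := mem_ball.1 hy
  exact mem_ball.2 ⟨w, hw.trans h⟩

lemma ball_mono_graph (h : H ≤ G) (k : ℕ) (v : V) : ball H k v ⊆ ball G k v := by
  intro y hy
  obtain ⟨w, hw⟩ := mem_ball.1 hy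
  exact mem_ball.2 ⟨w.mapLe h, by simpa using hw⟩

lemma reachable_of_mem_ball {k : ℕ} {v y : V} (h : y ∈ ball H k v) : H.Reachable v y := by
  obtain ⟨w, _⟩ := mem_ball.1 h
  exact ⟨w⟩

lemma card_ball_le {d : ℕ} (hd : ∀ v, (G.neighborSet v).ncard = d) (k : ℕ) (v : V) :
    (ball G k v).card ≤ (d + 1) ^ k := by
  induction k generalizing v with
  | zero =>
    rw [pow_zero, Finset.card_le_one]
    have : ∀ y ∈ ball G 0 v, v = y := by
      intro y hy
      obtain ⟨w, hw⟩ := mem_ball.1 hy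
      exact w.eq_of_length_eq_zero (by omega)
    intro a ha b hb
    rw [← this a ha, ← this b hb]
  | succ k ih =>
    have hsub : ball G (k + 1) v ⊆
        insert v ((Finset.univ.filter (fun w => G.Adj v w)).biUnion (fun w => ball G k w)) := by
      intro y hy
      obtain ⟨w, hw⟩ := mem_ball.1 hy
      cases w with
      | nil => exact Finset.mem_insert_self _ _
      | cons h q =>
        refine Finset.mem_insert_of_mem (Finset.mem_biUnion.2 ⟨_, by simpa using h, ?_⟩)
        exact mem_ball.2 ⟨q, by simpa using hw⟩
    have h1 := Finset.card_biUnion_le_card_mul (Finset.univ.filter (fun w => G.Adj v w))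
      (fun w => ball G k w) _ (fun w _ => ih w)
    rw [card_filter_adj hd] at h1
    have h2 := (Finset.card_le_card hsub).trans (Finset.card_insert_le _ _)
    have h3 : 1 ≤ (d + 1) ^ k := Nat.one_le_pow _ _ (by omega)
    calc _ ≤ d * (d + 1) ^ k + 1 := h2.trans (by omega)
      _ ≤ (d + 1) ^ (k + 1) := by rw [pow_succ]; linarith

lemma card_edgeFinset'_le {d : ℕ} (hd : ∀ v, (G.neighborSet v).ncard = d) :
    (edgeFinset' G).card ≤ Fintype.card V * d := by
  have hsub : edgeFinset' G ⊆ Finset.univ.biUnion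
      (fun v => (Finset.univ.filter (fun w => G.Adj v w)).image (fun w => s(v, w))) := by
    intro e he
    induction e using Sym2.ind with
    | _ x y =>
      have : G.Adj x y := mem_edgeFinset'.1 he
      exact Finset.mem_biUnion.2 ⟨x, Finset.mem_univ _, Finset.mem_image.2 ⟨y, by simpa, rfl⟩⟩
  refine (Finset.card_le_card hsub).trans (Finset.card_biUnion_le_card_mul _ _ _ fun v _ => ?_)
  exact Finset.card_image_le.trans (card_filter_adj hd v).le

end Balls

section LongPaths

variable {G : SimpleGraph V}

lemma fromEdgeSet_le {s : Finset (Sym2 V)} (hs : s ⊆ edgeFinset' G) :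
    SimpleGraph.fromEdgeSet (s : Set (Sym2 V)) ≤ G := by
  intro x y h
  exact mem_edgeFinset'.1 (hs (by simpa using ((SimpleGraph.fromEdgeSet_adj _).1 h).1))

lemma exists_walk_of_reach {s : Finset (Sym2 V)} {k : ℕ} {u v : V} (h : G.Adj u v)
    (hr : Reach G s k u v) : ∃ y, ∃ q : G.Walk v y,
      (SimpleGraph.Walk.cons h q).edges.IsChain (· ≠ ·) ∧ q.length = k ∧ ∀ e ∈ q.edges, e ∈ s := by
  induction k generalizing u v with
  | zero => exact ⟨v, .nil, by simp, by simp, by simp⟩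
  | succ k ih =>
    obtain ⟨w, ⟨hvw, hwu⟩, he, hr⟩ := hr
    obtain ⟨y, q, h1, h2, h3⟩ := ih hvw hr
    have hne : s(u, v) ≠ s(v, w) := by
      intro h'
      rcases Sym2.eq_iff.1 h' with ⟨h1, _⟩ | ⟨h1, _⟩
      · exact h.ne h1
      · exact hwu h1.symm
    refine ⟨y, .cons hvw q, ?_, by simp [h2], ?_⟩
    · simp only [SimpleGraph.Walk.edges_cons, List.isChain_cons_cons] at h1 ⊢
      exact ⟨hne, h1⟩
    · intro e he'
      rw [SimpleGraph.Walk.edges_cons, List.mem_cons] at he'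
      rcases he' with rfl | he'
      · exact he
      · exact h3 e he'

lemma card_ball_of_rootReach {R k : ℕ}
    (hg : ∀ (a : V) (c : G.Walk a a), c.IsCycle → R < c.length) (hK : k + 1 ≤ R)
    {s : Finset (Sym2 V)} {v : V} (hr : RootReach G s k v) :
    k + 2 ≤ (ball (SimpleGraph.fromEdgeSet (s : Set (Sym2 V))) (k + 1) v).card := by
  obtain ⟨w, hvw, he, hr⟩ := hr
  obtain ⟨y, q, h1, h2, h3⟩ := exists_walk_of_reach hvw hr
  set p := SimpleGraph.Walk.cons hvw q with hp
  have hps : ∀ e ∈ p.edges, e ∈ s := by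
    intro e he'
    rw [hp, SimpleGraph.Walk.edges_cons, List.mem_cons] at he'
    rcases he' with rfl | he'
    · exact he
    · exact h3 e he'
  have hpl : p.length = k + 1 := by simp [hp, h2]
  have hac : (SimpleGraph.fromEdgeSet (p.edges.toFinset : Set (Sym2 V))).IsAcyclic := by
    refine isAcyclic_fromEdgeSet_of_card_le hg _ ?_ ?_
    · intro e he
      exact p.edges_subset_edgeSet (List.mem_toFinset.1 (Finset.mem_coe.1 he))
    · refine p.edges.toFinset_card_le.trans ?_
      rw [SimpleGraph.Walk.length_edges]; omega
  have hpath := (hac.isPath_iff_isChain (p.transfer _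
    (walk_mem_edgeSet_fromEdgeSet p (fun e he => List.mem_toFinset.2 he)))).2
    (by rw [SimpleGraph.Walk.edges_transfer]; exact h1)
  have hnd : p.support.Nodup := by
    have := hpath.support_nodup
    rwa [SimpleGraph.Walk.support_transfer] at this
  set p' := p.transfer _ (walk_mem_edgeSet_fromEdgeSet p hps) with hp'
  have hsub : p.support.toFinset ⊆ ball (SimpleGraph.fromEdgeSet (s : Set (Sym2 V))) (k + 1) v := by
    intro z hz
    have hz' : z ∈ p'.support := by
      rw [hp', SimpleGraph.Walk.support_transfer]; exact List.mem_toFinset.1 hz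
    refine mem_ball.2 ⟨p'.takeUntil z hz', (p'.length_takeUntil_le_length hz').trans ?_⟩
    rw [hp', SimpleGraph.Walk.length_transfer, hpl]
  have := Finset.card_le_card hsub
  rw [List.toFinset_card_of_nodup hnd, SimpleGraph.Walk.length_support, hpl] at this
  exact this

lemma reach_of_path {s : Finset (Sym2 V)} (hs : s ⊆ edgeFinset' G) {k : ℕ} {u v y : V}
    (h : (SimpleGraph.fromEdgeSet (s : Set (Sym2 V))).Adj u v)
    (q : (SimpleGraph.fromEdgeSet (s : Set (Sym2 V))).Walk v y)
    (hq : (SimpleGraph.Walk.cons h q).IsPath) (hl : k ≤ q.length) : Reach G s k u v := by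
  induction k generalizing u v with
  | zero => trivial
  | succ k ih =>
    cases q with
    | nil => simp at hl
    | @cons _ w _ h' q' =>
      refine ⟨w, ⟨fromEdgeSet_le hs h', ?_⟩, ?_, ih h' q' hq.of_cons (by simpa using hl)⟩
      · rintro rfl
        have := ((SimpleGraph.Walk.cons_isPath_iff _ _).1 hq).2
        simp at this
      · simpa using ((SimpleGraph.fromEdgeSet_adj _).1 h').1

lemma rootReach_of_card {d : ℕ} (hd : ∀ v, (G.neighborSet v).ncard = d)
    {s : Finset (Sym2 V)} (hs : s ⊆ edgeFinset' G) {k : ℕ} {v : V} {A : Finset V}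
    (hA : ∀ y ∈ A, (SimpleGraph.fromEdgeSet (s : Set (Sym2 V))).Reachable v y)
    (hcard : (d + 1) ^ k < A.card) : RootReach G s k v := by
  have hlt : (ball (SimpleGraph.fromEdgeSet (s : Set (Sym2 V))) k v).card < A.card :=
    ((Finset.card_le_card (ball_mono_graph (fromEdgeSet_le hs) k v)).trans
      (card_ball_le hd k v)).trans_lt hcard
  obtain ⟨y, hyA, hy⟩ := Finset.exists_mem_notMem_of_card_lt_card hlt
  obtain ⟨w, hw⟩ := (hA y hyA).exists_isPath
  have hl : k < w.length := by
    by_contra hcon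
    exact hy (mem_ball.2 ⟨w, by omega⟩)
  cases w with
  | nil => simp at hl
  | @cons _ x _ h q =>
    refine ⟨x, fromEdgeSet_le hs h, ?_, reach_of_path hs h q hw ?_⟩
    · simpa using ((SimpleGraph.fromEdgeSet_adj _).1 h).1
    · rw [SimpleGraph.Walk.length_cons] at hl; omega

/-- The number of vertices starting a non-backtracking walk of length `k + 1` inside `s`. -/
def numReach (G : SimpleGraph V) (k : ℕ) (s : Finset (Sym2 V)) : ℝ :=
  ((Finset.univ.filter (fun v => RootReach G s k v)).card : ℝ)

lemma bexp_numReach {d R k : ℕ} (hd : ∀ v, (G.neighborSet v).ncard = d)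
    (hg : ∀ (a : V) (c : G.Walk a a), c.IsCycle → R < c.length) (hK : 2 * (k + 1) ≤ R) (p : ℝ) :
    bexp (edgeFinset' G) p (numReach G k) = Fintype.card V * rootSurv d p k := by
  have h : numReach G k = fun s => ∑ v : V, if RootReach G s k v then (1 : ℝ) else 0 := by
    funext s
    simp [numReach]
  rw [h, bexp_sum, Finset.sum_congr rfl fun v _ => bexp_rootReach hd hg hK p v]
  simp

lemma mem_ball_of_mem_rootSupp {k : ℕ} {v w x y : V} (h : G.Adj v w)
    (he : s(x, y) ∈ insert s(v, w) (reachSupp G k v w)) : v ∈ ball G (k + 1) x := by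
  obtain ⟨z, q, _, h2, h3, _⟩ := exists_walk_of_mem_branch h he
  have hx := SimpleGraph.Walk.fst_mem_support_of_mem_edges _ h3
  refine mem_ball_symm (mem_ball.2 ⟨(SimpleGraph.Walk.cons h q).takeUntil x hx,
    (SimpleGraph.Walk.length_takeUntil_le_length _ hx).trans ?_⟩)
  simpa using h2

lemma abs_numReach_insert_sub_le {d : ℕ} (hd : ∀ v, (G.neighborSet v).ncard = d) (k : ℕ)
    (e : Sym2 V) (s : Finset (Sym2 V)) :
    |numReach G k (insert e s) - numReach G k s| ≤ ((d + 1) ^ (k + 1) : ℕ) := by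
  have hmono : (Finset.univ.filter (fun v => RootReach G s k v)) ⊆
      Finset.univ.filter (fun v => RootReach G (insert e s) k v) :=
    Finset.monotone_filter_right _ fun v _ => rootReach_mono (Finset.subset_insert e s)
  unfold numReach
  induction e using Sym2.ind with
  | _ x y =>
    have hsub : (Finset.univ.filter (fun v => RootReach G (insert s(x, y) s) k v)) ⊆
        (Finset.univ.filter (fun v => RootReach G s k v)) ∪ ball G (k + 1) x := by
      intro v hv
      rw [Finset.mem_union]
      by_contra! hcon
      obtain ⟨h1, h2⟩ := hcon
      obtain ⟨w, hw, he, hr⟩ := (Finset.mem_filter.1 hv).2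
      have hnot : s(x, y) ∉ insert s(v, w) (reachSupp G k v w) :=
        fun h => h2 (mem_ball_of_mem_rootSupp hw h)
      rw [Set.mem_insert_iff, not_or] at hnot
      refine h1 (Finset.mem_filter.2 ⟨Finset.mem_univ _, w, hw, ?_, ?_⟩)
      · exact (Finset.mem_insert.1 he).resolve_left (Ne.symm hnot.1)
      · refine (reach_congr k v w fun e' he' => ?_).1 hr
        have : e' ≠ s(x, y) := fun h => hnot.2 (h ▸ he')
        simp [this]
    have h1 := Finset.card_le_card hmono
    have h2 := (Finset.card_le_card hsub).trans (Finset.card_union_le _ _)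
    have h3 := card_ball_le hd (k + 1) x
    rw [abs_of_nonneg (sub_nonneg.2 (by exact_mod_cast h1)), sub_le_iff_le_add]
    exact_mod_cast h2.trans (by omega)

end LongPaths

section Connectors

variable {G : SimpleGraph V}

lemma ball_biUnion_growth {d : ℕ} (hd : ∀ v, (G.neighborSet v).ncard = d) {b : ℝ}
    (hexp : IsExpander G b d) (F : Finset (Sym2 V)) (A : Finset V) (i : ℕ)
    (hsmall : ((A.biUnion (ball (SimpleGraph.fromEdgeSet (F : Set (Sym2 V))) i)).card : ℝ)
      ≤ Fintype.card V / 2) :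
    b * ((A.biUnion (ball (SimpleGraph.fromEdgeSet (F : Set (Sym2 V))) i)).card : ℝ)
        + d * ((A.biUnion (ball (SimpleGraph.fromEdgeSet (F : Set (Sym2 V))) i)).card : ℝ)
      ≤ (edgeFinset' G \ F).card
        + d * ((A.biUnion (ball (SimpleGraph.fromEdgeSet (F : Set (Sym2 V))) (i + 1))).card : ℝ) := by
  set H := SimpleGraph.fromEdgeSet (F : Set (Sym2 V)) with hH
  set U := A.biUnion (ball H i) with hU
  set U' := A.biUnion (ball H (i + 1)) with hU'
  have hUU' : U ⊆ U' := Finset.biUnion_mono fun a _ => ball_mono_radius (Nat.le_succ i) a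
  have hcut := hexp.2 U hsmall
  have hsub : (edgeFinset' G).filter (fun e => ∃ x ∈ U, ∃ y, y ∉ U ∧ e = s(x, y)) ⊆
      (edgeFinset' G \ F) ∪ (U' \ U).biUnion
        (fun y => (Finset.univ.filter (fun w => G.Adj y w)).image (fun w => s(y, w))) := by
    intro e he
    obtain ⟨heG, x, hx, y, hy, rfl⟩ := Finset.mem_filter.1 he
    have hxy : G.Adj x y := mem_edgeFinset'.1 heG
    by_cases heF : s(x, y) ∈ F
    · refine Finset.mem_union_right _ (Finset.mem_biUnion.2 ⟨y, ?_, ?_⟩)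
      · refine Finset.mem_sdiff.2 ⟨?_, hy⟩
        obtain ⟨a, ha, hxa⟩ := Finset.mem_biUnion.1 hx
        refine Finset.mem_biUnion.2 ⟨a, ha, mem_ball_trans hxa (mem_ball.2 ⟨.cons ?_ .nil, ?_⟩)⟩
        · exact (SimpleGraph.fromEdgeSet_adj _).2 ⟨by simpa using heF, hxy.ne⟩
        · simp
      · exact Finset.mem_image.2 ⟨x, by simpa using hxy.symm, Sym2.eq_swap⟩
    · exact Finset.mem_union_left _ (Finset.mem_sdiff.2 ⟨heG, heF⟩)
  have h1 : cutCard G U ≤ (edgeFinset' G \ F).card + (U' \ U).card * d := by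
    refine (Finset.card_le_card hsub).trans ((Finset.card_union_le _ _).trans ?_)
    refine Nat.add_le_add_left (Finset.card_biUnion_le_card_mul _ _ _ fun y _ => ?_) _
    exact Finset.card_image_le.trans (card_filter_adj hd y).le
  have h2 : ((U' \ U).card : ℝ) = U'.card - U.card := by
    rw [Finset.card_sdiff_of_subset hUU', Nat.cast_sub (Finset.card_le_card hUU')]
  have h3 : (cutCard G U : ℝ) ≤ (edgeFinset' G \ F).card + (U' \ U).card * d := by
    exact_mod_cast h1
  rw [h2] at h3
  linarith

lemma card_ball_biUnion_large {d : ℕ} (hd : ∀ v, (G.neighborSet v).ncard = d) {b η : ℝ}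
    (hb : 0 < b) (hd0 : 0 < d)
    (hexp : IsExpander G b d) (hV : 0 < Fintype.card V) (F : Finset (Sym2 V)) (A : Finset V)
    (hA : η * Fintype.card V ≤ A.card)
    (hF : ((edgeFinset' G \ F).card : ℝ) ≤ b * η * Fintype.card V / 2) {l : ℕ}
    (hl : d < b * η * l) :
    (Fintype.card V : ℝ) / 2 <
      (A.biUnion (ball (SimpleGraph.fromEdgeSet (F : Set (Sym2 V))) l)).card := by
  set n : ℝ := (Fintype.card V : ℝ) with hn
  have hn0 : 0 < n := by rw [hn]; exact_mod_cast hV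
  have hd0' : (0 : ℝ) < d := by exact_mod_cast hd0
  have key : ∀ i : ℕ, n / 2 <
      (A.biUnion (ball (SimpleGraph.fromEdgeSet (F : Set (Sym2 V))) i)).card ∨
      b * η * n / 2 * i ≤
        d * ((A.biUnion (ball (SimpleGraph.fromEdgeSet (F : Set (Sym2 V))) i)).card : ℝ) := by
    intro i
    induction i with
    | zero => right; simp; positivity
    | succ i ih =>
      have hAsub : A ⊆ A.biUnion (ball (SimpleGraph.fromEdgeSet (F : Set (Sym2 V))) i) :=
        fun a ha => Finset.mem_biUnion.2 ⟨a, ha, mem_ball_self i a⟩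
      have hmono : A.biUnion (ball (SimpleGraph.fromEdgeSet (F : Set (Sym2 V))) i) ⊆
          A.biUnion (ball (SimpleGraph.fromEdgeSet (F : Set (Sym2 V))) (i + 1)) :=
        Finset.biUnion_mono fun a _ => ball_mono_radius (Nat.le_succ i) a
      have h1 : (A.card : ℝ) ≤
          (A.biUnion (ball (SimpleGraph.fromEdgeSet (F : Set (Sym2 V))) i)).card := by
        exact_mod_cast Finset.card_le_card hAsub
      have h2 : ((A.biUnion (ball (SimpleGraph.fromEdgeSet (F : Set (Sym2 V))) i)).card : ℝ) ≤
          (A.biUnion (ball (SimpleGraph.fromEdgeSet (F : Set (Sym2 V))) (i + 1))).card := by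
        exact_mod_cast Finset.card_le_card hmono
      rcases ih with ih | ih
      · left; linarith
      · by_cases hs : ((A.biUnion (ball (SimpleGraph.fromEdgeSet (F : Set (Sym2 V))) i)).card : ℝ)
            ≤ n / 2
        · right
          have h3 := ball_biUnion_growth hd hexp F A i hs
          have h4 : b * (η * n) ≤
              b * ((A.biUnion (ball (SimpleGraph.fromEdgeSet (F : Set (Sym2 V))) i)).card : ℝ) :=
            mul_le_mul_of_nonneg_left (hA.trans h1) hb.le
          push_cast
          linarith
        · left; linarith
  rcases key l with h | h
  · exact h
  · have h5 : d * n < b * η * l * n := mul_lt_mul_of_pos_right hl hn0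
    refine lt_of_mul_lt_mul_left ?_ hd0'.le
    linarith

/-- A set of edges of `G` of size at most `L` that links `A` to `B`. -/
def IsConnector (G : SimpleGraph V) (L : ℕ) (A B : Finset V) (Q : Finset (Sym2 V)) : Prop :=
  Q ⊆ edgeFinset' G ∧ Q.card ≤ L ∧
    ∃ x ∈ A, ∃ y ∈ B, (SimpleGraph.fromEdgeSet (Q : Set (Sym2 V))).Reachable x y

lemma IsConnector.nonempty {L : ℕ} {A B : Finset V} (hAB : Disjoint A B) {Q : Finset (Sym2 V)}
    (hQ : IsConnector G L A B Q) : Q.Nonempty := by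
  obtain ⟨_, _, x, hx, y, hy, ⟨w⟩⟩ := hQ
  cases w with
  | nil => exact absurd hy (Finset.disjoint_left.1 hAB hx)
  | cons h _ => exact ⟨_, by simpa using ((SimpleGraph.fromEdgeSet_adj _).1 h).1⟩

lemma exists_connector_family {d : ℕ} (hd : ∀ v, (G.neighborSet v).ncard = d) {b η : ℝ}
    (hb : 0 < b) (hd0 : 0 < d)
    (hexp : IsExpander G b d) (hV : 0 < Fintype.card V) {A B : Finset V} (hAB : Disjoint A B)
    (hA : η * Fintype.card V ≤ A.card) (hB : η * Fintype.card V ≤ B.card) {l : ℕ}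
    (hl : d < b * η * l) :
    ∃ 𝒬 : Finset (Finset (Sym2 V)), (𝒬 : Set (Finset (Sym2 V))).PairwiseDisjoint id ∧
      (∀ Q ∈ 𝒬, IsConnector G (2 * l) A B Q) ∧
      b * η * Fintype.card V / 2 ≤ 𝒬.card * (2 * l : ℕ) := by
  obtain ⟨𝒬, h𝒬, hmax⟩ := Finset.exists_max_image
    (Finset.univ.filter (fun 𝒬 : Finset (Finset (Sym2 V)) =>
      (𝒬 : Set (Finset (Sym2 V))).PairwiseDisjoint id ∧ ∀ Q ∈ 𝒬, IsConnector G (2 * l) A B Q))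
    Finset.card ⟨∅, by simp⟩
  obtain ⟨hdis, hcon⟩ := (Finset.mem_filter.1 h𝒬).2
  refine ⟨𝒬, hdis, hcon, ?_⟩
  by_contra! hlt
  set D := 𝒬.biUnion id with hD
  set F := edgeFinset' G \ D with hF
  have hDcard : D.card ≤ 𝒬.card * (2 * l) :=
    Finset.card_biUnion_le_card_mul _ _ _ fun Q hQ => (hcon Q hQ).2.1
  have hEF : ((edgeFinset' G \ F).card : ℝ) ≤ b * η * Fintype.card V / 2 := by
    have : edgeFinset' G \ F ⊆ D := by
      intro e he
      by_contra heD
      simp only [hF, Finset.mem_sdiff] at he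
      exact he.2 ⟨he.1, heD⟩
    have h1 : ((edgeFinset' G \ F).card : ℝ) ≤ 𝒬.card * (2 * l : ℕ) := by
      exact_mod_cast (Finset.card_le_card this).trans hDcard
    linarith
  have gA := card_ball_biUnion_large hd hb hd0 hexp hV F A hA hEF hl
  have gB := card_ball_biUnion_large hd hb hd0 hexp hV F B hB hEF hl
  obtain ⟨z, hz⟩ : ∃ z, z ∈ A.biUnion (ball (SimpleGraph.fromEdgeSet (F : Set (Sym2 V))) l) ∩
      B.biUnion (ball (SimpleGraph.fromEdgeSet (F : Set (Sym2 V))) l) := by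
    by_contra! hno
    have hdisj := Finset.disjoint_iff_inter_eq_empty.2 (Finset.eq_empty_of_forall_notMem hno)
    have h1 := Finset.card_le_univ
      (A.biUnion (ball (SimpleGraph.fromEdgeSet (F : Set (Sym2 V))) l) ∪
        B.biUnion (ball (SimpleGraph.fromEdgeSet (F : Set (Sym2 V))) l))
    rw [Finset.card_union_of_disjoint hdisj] at h1
    have h2 : ((A.biUnion (ball (SimpleGraph.fromEdgeSet (F : Set (Sym2 V))) l)).card : ℝ) +
      (B.biUnion (ball (SimpleGraph.fromEdgeSet (F : Set (Sym2 V))) l)).card ≤ Fintype.card V := by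
        exact_mod_cast h1
    linarith
  obtain ⟨hzA, hzB⟩ := Finset.mem_inter.1 hz
  obtain ⟨x, hx, hzx⟩ := Finset.mem_biUnion.1 hzA
  obtain ⟨y, hy, hzy⟩ := Finset.mem_biUnion.1 hzB
  obtain ⟨w, hw⟩ := mem_ball.1 (mem_ball_trans hzx (mem_ball_symm hzy))
  have hwF : ∀ e ∈ w.edges, e ∈ F := by
    intro e he
    have := w.edges_subset_edgeSet he
    rw [SimpleGraph.edgeSet_fromEdgeSet] at this
    exact_mod_cast this.1
  have hQ : IsConnector G (2 * l) A B w.edges.toFinset := by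
    refine ⟨fun e he => (Finset.mem_sdiff.1 (hwF e (List.mem_toFinset.1 he))).1, ?_,
      x, hx, y, hy, ⟨w.transfer _ (walk_mem_edgeSet_fromEdgeSet w
        fun e he => List.mem_toFinset.2 he)⟩⟩
    refine (List.toFinset_card_le _).trans ?_
    rw [SimpleGraph.Walk.length_edges]; omega
  have hQD : ∀ Q ∈ 𝒬, Disjoint w.edges.toFinset Q := by
    intro Q hQ'
    rw [Finset.disjoint_left]
    intro e he heQ
    exact (Finset.mem_sdiff.1 (hwF e (List.mem_toFinset.1 he))).2
      (Finset.mem_biUnion.2 ⟨Q, hQ', heQ⟩)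
  have hnot : w.edges.toFinset ∉ 𝒬 := by
    intro hmem
    have := hQD _ hmem
    rw [disjoint_self] at this
    exact (hQ.nonempty hAB).ne_empty this
  have hbig := hmax (insert w.edges.toFinset 𝒬) (Finset.mem_filter.2 ⟨Finset.mem_univ _, by
    rw [Finset.coe_insert]
    exact hdis.insert fun Q hQ' _ => hQD Q hQ', by
    intro Q hQ'
    rcases Finset.mem_insert.1 hQ' with rfl | hQ'
    · exact hQ
    · exact hcon Q hQ'⟩)
  rw [Finset.card_insert_of_notMem hnot] at hbig
  omega

lemma abs_card_filter_subset_insert_sub_le {α : Type*} [DecidableEq α]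
    {𝒬 : Finset (Finset α)} (hdis : (𝒬 : Set (Finset α)).PairwiseDisjoint id)
    (e : α) (t : Finset α) :
    |((𝒬.filter (fun Q => Q ⊆ insert e t)).card : ℝ) - (𝒬.filter (fun Q => Q ⊆ t)).card| ≤ 1 := by
  have h1 : 𝒬.filter (fun Q => Q ⊆ t) ⊆ 𝒬.filter (fun Q => Q ⊆ insert e t) :=
    Finset.monotone_filter_right _ fun Q _ h => h.trans (Finset.subset_insert e t)
  have h2 : 𝒬.filter (fun Q => Q ⊆ insert e t) ⊆
      𝒬.filter (fun Q => Q ⊆ t) ∪ 𝒬.filter (fun Q => e ∈ Q) := by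
    intro Q hQ
    obtain ⟨hQ, hsub⟩ := Finset.mem_filter.1 hQ
    by_cases he : e ∈ Q
    · exact Finset.mem_union_right _ (Finset.mem_filter.2 ⟨hQ, he⟩)
    · exact Finset.mem_union_left _
        (Finset.mem_filter.2 ⟨hQ, (Finset.subset_insert_iff_of_notMem he).1 hsub⟩)
  have h3 : (𝒬.filter (fun Q => e ∈ Q)).card ≤ 1 := by
    rw [Finset.card_le_one]
    intro Q hQ Q' hQ'
    obtain ⟨hQ, he⟩ := Finset.mem_filter.1 hQ
    obtain ⟨hQ', he'⟩ := Finset.mem_filter.1 hQ'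
    by_contra hne
    exact Finset.disjoint_left.1 (hdis hQ hQ' hne) he he'
  have h4 := Finset.card_le_card h1
  have h5 := (Finset.card_le_card h2).trans (Finset.card_union_le _ _)
  rw [abs_of_nonneg (sub_nonneg.2 (by exact_mod_cast h4)), sub_le_iff_le_add]
  exact_mod_cast h5.trans (by omega)

end Connectors

/-- In a sprinkled expander, large disjoint sets are linked by linearly many disjoint connectors,
except with exponentially small probability. -/
lemma exists_sprinkle_constants {d : ℕ} (hd0 : 0 < d) {b η p : ℝ} (hb : 0 < b) (hη : 0 < η)
    (hp0 : 0 < p) (hp1 : p < 1) : ∃ κ > (0 : ℝ), ∃ γ > (0 : ℝ), ∃ L : ℕ,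
    ∀ (V : Type) [Fintype V] [DecidableEq V] (G : SimpleGraph V), IsRegularExpander G b d →
      0 < Fintype.card V → ∀ A B : Finset V, Disjoint A B → η * Fintype.card V ≤ A.card →
      η * Fintype.card V ≤ B.card →
      ∃ 𝒬 : Finset (Finset (Sym2 V)), (𝒬 : Set (Finset (Sym2 V))).PairwiseDisjoint id ∧
        (∀ Q ∈ 𝒬, IsConnector G L A B Q) ∧
        bexp (edgeFinset' G) p (fun t =>
          if ((𝒬.filter (fun Q => Q ⊆ t)).card : ℝ) < κ * Fintype.card V then 1 else 0)
          ≤ Real.exp (-γ * Fintype.card V) := by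
  obtain ⟨l, hl⟩ := exists_nat_gt (d / (b * η))
  rw [div_lt_iff₀ (by positivity)] at hl
  have hd0' : (0 : ℝ) < d := by exact_mod_cast hd0
  have hl0 : (0 : ℝ) < l := by
    by_contra! h
    nlinarith [mul_pos hb hη]
  set κ : ℝ := b * η / (8 * l) * p ^ (2 * l) with hκ
  have hκ0 : 0 < κ := by positivity
  set u : ℝ := min 1 (κ / (2 * d)) with hu
  have hu0 : 0 < u := lt_min one_pos (by positivity)
  have hu1 : u ≤ 1 := min_le_left _ _
  have hu2 : u * (2 * d) ≤ κ := by
    rw [← le_div_iff₀ (by positivity)]; exact min_le_right _ _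
  refine ⟨κ, hκ0, u * κ / 2, by positivity, 2 * l, ?_⟩
  intro V _ _ G hG hV A B hAB hA hB
  obtain ⟨𝒬, hdis, hcon, hcard⟩ := exists_connector_family hG.2 hb hd0 hG.1 hV hAB hA hB
    (l := l) (by linarith)
  refine ⟨𝒬, hdis, hcon, ?_⟩
  set n : ℝ := (Fintype.card V : ℝ) with hn
  have hn0 : 0 < n := by rw [hn]; exact_mod_cast hV
  set f : Finset (Sym2 V) → ℝ := fun t => ((𝒬.filter (fun Q => Q ⊆ t)).card : ℝ) with hf
  have hmean : 2 * κ * n ≤ bexp (edgeFinset' G) p f := by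
    have h1 : f = fun t => ∑ Q ∈ 𝒬, if Q ⊆ t then (1 : ℝ) else 0 := by
      funext t; simp [hf]
    have h2 : (𝒬.card : ℝ) * p ^ (2 * l) ≤ bexp (edgeFinset' G) p f := by
      rw [h1, bexp_sum, ← nsmul_eq_mul]
      refine Finset.card_nsmul_le_sum _ _ _ fun Q hQ => ?_
      rw [bexp_subset (hcon Q hQ).1]
      exact pow_le_pow_of_le_one hp0.le hp1.le (hcon Q hQ).2.1
    refine le_trans ?_ h2
    have h3 : b * η * n / (4 * l) ≤ 𝒬.card := by
      rw [div_le_iff₀ (by positivity)]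
      push_cast at hcard
      linarith
    have h4 := mul_le_mul_of_nonneg_right h3 (by positivity : 0 ≤ p ^ (2 * l))
    refine le_trans (le_of_eq ?_) h4
    rw [hκ]; field_simp; ring
  have htail := bexp_lower_tail (edgeFinset' G) hp0.le hp1.le (c := 1) (l := u) (a := κ * n)
    hu0.le (by linarith) f (abs_card_filter_subset_insert_sub_le hdis)
  have hle : bexp (edgeFinset' G) p (fun t => if f t < κ * n then 1 else 0)
      ≤ bexp (edgeFinset' G) p
        (fun t => if f t ≤ bexp (edgeFinset' G) p f - κ * n then 1 else 0) := by
    refine bexp_mono hp0.le hp1.le fun t _ => ?_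
    split_ifs with h1 h2
    · exact le_rfl
    · exact absurd (by linarith) h2
    · norm_num
    · exact le_rfl
  refine hle.trans (htail.trans (Real.exp_le_exp.2 ?_))
  have hE : ((edgeFinset' G).card : ℝ) ≤ n * d := by
    rw [hn]; exact_mod_cast card_edgeFinset'_le hG.2
  have h5 : ((edgeFinset' G).card : ℝ) * (u * 1) ^ 2 ≤ n * d * u ^ 2 := by
    rw [mul_one]; exact mul_le_mul_of_nonneg_right hE (by positivity)
  have h6 : n * u * (u * (2 * d)) ≤ n * u * κ := mul_le_mul_of_nonneg_left hu2 (by positivity)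
  nlinarith

section Net

variable {H : SimpleGraph V}

lemma exists_net (H : SimpleGraph V) (r : ℕ) (W : Finset V) :
    ∃ N ⊆ W, (N : Set V).PairwiseDisjoint (ball H r) ∧ ∀ v ∈ W, ∃ x ∈ N, v ∈ ball H (r + r) x := by
  obtain ⟨N, hN, hmax⟩ := Finset.exists_max_image
    (W.powerset.filter (fun N : Finset V => (N : Set V).PairwiseDisjoint (ball H r)))
    Finset.card ⟨∅, by simp⟩
  obtain ⟨hNW, hdis⟩ := Finset.mem_filter.1 hN
  rw [Finset.mem_powerset] at hNW
  refine ⟨N, hNW, hdis, fun v hv => ?_⟩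
  by_contra! hcon
  have hd : ∀ x ∈ N, Disjoint (ball H r v) (ball H r x) := by
    intro x hx
    rw [Finset.disjoint_left]
    intro y hy hy'
    exact hcon x hx (mem_ball_trans hy' (mem_ball_symm hy))
  have hvN : v ∉ N := fun h => hcon v h (mem_ball_self _ _)
  have := hmax (insert v N) (Finset.mem_filter.2
    ⟨Finset.mem_powerset.2 (Finset.insert_subset hv hNW), by
      rw [Finset.coe_insert]
      exact hdis.insert fun x hx _ => hd x hx⟩)
  rw [Finset.card_insert_of_notMem hvN] at this
  omega

lemma card_net_mul_le {r m : ℕ} {N : Finset V} (hdis : (N : Set V).PairwiseDisjoint (ball H r))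
    (hm : ∀ x ∈ N, m ≤ (ball H r x).card) : N.card * m ≤ Fintype.card V := by
  calc N.card * m ≤ ∑ x ∈ N, (ball H r x).card := by
        rw [← smul_eq_mul]; exact Finset.card_nsmul_le_sum _ _ _ hm
    _ = (N.biUnion (ball H r)).card := (Finset.card_biUnion hdis).symm
    _ ≤ Fintype.card V := Finset.card_le_univ _

end Net

section Linked

/-- `A` and `B` stay connected through edges of `t` after deleting fewer than `m` edges. -/
def Linked (m : ℝ) (t : Finset (Sym2 V)) (A B : Finset V) : Prop :=
  ∀ F : Finset (Sym2 V), (F.card : ℝ) < m → ∃ x ∈ A, ∃ y ∈ B,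
    (SimpleGraph.fromEdgeSet ((t \ F : Finset (Sym2 V)) : Set (Sym2 V))).Reachable x y

lemma linked_of_connectors {G : SimpleGraph V} {L : ℕ} {A B : Finset V}
    {𝒬 : Finset (Finset (Sym2 V))} (hdis : (𝒬 : Set (Finset (Sym2 V))).PairwiseDisjoint id)
    (hcon : ∀ Q ∈ 𝒬, IsConnector G L A B Q) {m : ℝ} {t : Finset (Sym2 V)}
    (hm : m ≤ (𝒬.filter (fun Q => Q ⊆ t)).card) : Linked m t A B := by
  intro F hF
  obtain ⟨Q, hQ, hQF⟩ : ∃ Q ∈ 𝒬.filter (fun Q => Q ⊆ t), Disjoint Q F := by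
    by_contra! hall
    have : (𝒬.filter (fun Q => Q ⊆ t)).card ≤ F.card := by
      refine Finset.card_le_card_of_forall_subsingleton (fun Q e => e ∈ Q) ?_ ?_
      · intro Q hQ
        obtain ⟨e, he, he'⟩ := Finset.not_disjoint_iff.1 (hall Q hQ)
        exact ⟨e, he', he⟩
      · intro e _ Q hQ Q' hQ'
        by_contra hne
        exact Finset.disjoint_left.1 (hdis (Finset.mem_filter.1 hQ.1).1
          (Finset.mem_filter.1 hQ'.1).1 hne) hQ.2 hQ'.2
    have : ((𝒬.filter (fun Q => Q ⊆ t)).card : ℝ) ≤ F.card := by exact_mod_cast this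
    linarith
  obtain ⟨hQ𝒬, hQt⟩ := Finset.mem_filter.1 hQ
  obtain ⟨_, _, x, hx, y, hy, hxy⟩ := hcon Q hQ𝒬
  refine ⟨x, hx, y, hy, hxy.mono (SimpleGraph.fromEdgeSet_mono ?_)⟩
  intro e he
  exact Finset.mem_coe.2 (Finset.mem_sdiff.2 ⟨hQt he, Finset.disjoint_left.1 hQF he⟩)

end Linked

section Pieces

lemma exists_subset_sum_mem {ι : Type*} (T : Finset ι) (f : ι → ℝ) {a M : ℝ}
    (ha : 0 ≤ a) (hM : 0 ≤ M) (hf : ∀ i ∈ T, f i ≤ M) (hsum : a ≤ ∑ i ∈ T, f i) :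
    ∃ T' ⊆ T, a ≤ ∑ i ∈ T', f i ∧ ∑ i ∈ T', f i ≤ a + M := by
  induction T using Finset.induction_on with
  | empty => exact ⟨∅, subset_rfl, hsum, by simpa using add_nonneg ha hM⟩
  | insert i T hi ih =>
    by_cases h : a ≤ ∑ j ∈ T, f j
    · obtain ⟨T', hT', h1⟩ := ih (fun j hj => hf j (Finset.mem_insert_of_mem hj)) h
      exact ⟨T', hT'.trans (Finset.subset_insert _ _), h1⟩
    · refine ⟨insert i T, subset_rfl, hsum, ?_⟩
      rw [Finset.sum_insert hi]
      linarith [hf i (Finset.mem_insert_self _ _)]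

lemma mem_of_walk_of_closed {K : SimpleGraph V} {A S : Finset V}
    (hcl : ∀ u ∈ A, ∀ v, K.Adj u v → v ∈ A ∨ v ∈ S) {u v : V} (w : K.Walk u v)
    (hw : ∀ z ∈ w.support, z ∉ S) (hu : u ∈ A) : v ∈ A := by
  induction w with
  | nil => exact hu
  | cons h q ih =>
    refine ih (fun z hz => hw z (by simp [hz])) ((hcl _ hu _ h).resolve_right (hw _ ?_))
    simp

lemma mem_ball_of_mem_support {H : SimpleGraph V} {r : ℕ} {x y z : V} (w : H.Walk x y)
    (hw : w.length ≤ r) (hz : z ∈ w.support) : z ∈ ball H r x :=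
  mem_ball.2 ⟨w.takeUntil z hz, (w.length_takeUntil_le_length hz).trans hw⟩

lemma ball_subset_of_closed {H₁ H : SimpleGraph V} (hle : H₁ ≤ H) {A S : Finset V}
    (hcl : ∀ u ∈ A, ∀ v, H.Adj u v → v ∈ A ∨ v ∈ S) {r : ℕ} {x v : V}
    (hv : v ∈ ball H₁ r x) (hvA : v ∈ A) (hS : Disjoint (ball H₁ r x) S) : ball H₁ r x ⊆ A := by
  have hcl₁ : ∀ u ∈ A, ∀ v, H₁.Adj u v → v ∈ A ∨ v ∈ S := fun u hu v h => hcl u hu v (hle h)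
  have hx : x ∈ A := by
    obtain ⟨w, hw⟩ := mem_ball.1 hv
    refine mem_of_walk_of_closed hcl₁ w.reverse (fun z hz => ?_) hvA
    rw [SimpleGraph.Walk.support_reverse, List.mem_reverse] at hz
    exact Finset.disjoint_left.1 hS (mem_ball_of_mem_support w hw hz)
  intro y hy
  obtain ⟨w, hw⟩ := mem_ball.1 hy
  exact mem_of_walk_of_closed hcl₁ w
    (fun z hz => Finset.disjoint_left.1 hS (mem_ball_of_mem_support w hw hz)) hx

/-- The vertices of `W ∩ A` outside pieces contained in `A` lie close to `S`. -/
lemma card_inter_le_pieces {G H₁ H : SimpleGraph V} {d : ℕ}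
    (hd : ∀ v, (G.neighborSet v).ncard = d) (hG : H₁ ≤ G) (hle : H₁ ≤ H) {A S W N : Finset V}
    (hcl : ∀ u ∈ A, ∀ v, H.Adj u v → v ∈ A ∨ v ∈ S) {r : ℕ}
    (hcov : ∀ v ∈ W, ∃ x ∈ N, v ∈ ball H₁ r x) :
    (A ∩ W).card ≤ ((N.filter (fun x => ball H₁ r x ⊆ A)).biUnion (ball H₁ r)).card +
      S.card * (d + 1) ^ (r + r) := by
  have hsub : A ∩ W ⊆ (N.filter (fun x => ball H₁ r x ⊆ A)).biUnion (ball H₁ r) ∪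
      S.biUnion (ball G (r + r)) := by
    intro v hv
    obtain ⟨hvA, hvW⟩ := Finset.mem_inter.1 hv
    obtain ⟨x, hx, hvx⟩ := hcov v hvW
    by_cases hS : Disjoint (ball H₁ r x) S
    · exact Finset.mem_union_left _ (Finset.mem_biUnion.2 ⟨x, Finset.mem_filter.2
        ⟨hx, ball_subset_of_closed hle hcl hvx hvA hS⟩, hvx⟩)
    · obtain ⟨z, hz, hzS⟩ := Finset.not_disjoint_iff.1 hS
      exact Finset.mem_union_right _ (Finset.mem_biUnion.2 ⟨z, hzS,
        ball_mono_graph hG _ _ (mem_ball_trans (mem_ball_symm hz) hvx)⟩)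
  refine (Finset.card_le_card hsub).trans ((Finset.card_union_le _ _).trans ?_)
  exact Nat.add_le_add_left
    (Finset.card_biUnion_le_card_mul _ _ _ fun z _ => card_ball_le hd _ z) _

variable {s t : Finset (Sym2 V)} {W N : Finset V} {r : ℕ} {h m : ℝ}

/-- Any two large disjoint unions of pieces around `N` are linked through `t`. -/
def PiecesLinked (h m : ℝ) (r : ℕ) (N : Finset V) (s t : Finset (Sym2 V)) : Prop :=
  ∀ I ⊆ N, ∀ J ⊆ N,
    Disjoint (I.biUnion (ball (SimpleGraph.fromEdgeSet (s : Set (Sym2 V))) r))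
      (J.biUnion (ball (SimpleGraph.fromEdgeSet (s : Set (Sym2 V))) r)) →
    h ≤ (I.biUnion (ball (SimpleGraph.fromEdgeSet (s : Set (Sym2 V))) r)).card →
    h ≤ (J.biUnion (ball (SimpleGraph.fromEdgeSet (s : Set (Sym2 V))) r)).card →
    Linked m t (I.biUnion (ball (SimpleGraph.fromEdgeSet (s : Set (Sym2 V))) r))
      (J.biUnion (ball (SimpleGraph.fromEdgeSet (s : Set (Sym2 V))) r))

lemma mem_compVerts {H : SimpleGraph V} {c : H.ConnectedComponent} {v : V} :
    v ∈ compVerts H c ↔ H.connectedComponentMk v = c := by simp [compVerts]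

lemma exists_large_component (hlink : PiecesLinked h m r N s t) (hm : 0 < m)
    (hcov : ∀ v ∈ W, ∃ x ∈ N, v ∈ ball (SimpleGraph.fromEdgeSet (s : Set (Sym2 V))) r x)
    (hh : 0 ≤ h) {M : ℝ} (hM : 0 ≤ M) (hW : 2 * h + M ≤ W.card) :
    ∃ c : (SimpleGraph.fromEdgeSet ((s ∪ t : Finset (Sym2 V)) : Set (Sym2 V))).ConnectedComponent,
      M < (compVerts _ c).card := by
  set H := SimpleGraph.fromEdgeSet ((s ∪ t : Finset (Sym2 V)) : Set (Sym2 V)) with hH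
  set H₁ := SimpleGraph.fromEdgeSet (s : Set (Sym2 V)) with hH₁
  have hle : H₁ ≤ H := SimpleGraph.fromEdgeSet_mono (by simp)
  by_contra! hsmall
  have hfib (T : Finset H.ConnectedComponent) :
      ∑ c ∈ T, ((W.filter (fun v => H.connectedComponentMk v = c)).card : ℝ) =
        ((W.filter (fun v => H.connectedComponentMk v ∈ T)).card : ℝ) := by
    rw [← Nat.cast_sum, Nat.cast_inj, Finset.card_eq_sum_card_fiberwise
      (s := W.filter (fun v => H.connectedComponentMk v ∈ T)) (t := T)
      (f := fun v => H.connectedComponentMk v)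
      (fun v hv => (Finset.mem_filter.1 hv).2)]
    refine Finset.sum_congr rfl fun c hc => congrArg _ ?_
    ext v
    simp only [Finset.mem_filter]
    constructor
    · rintro ⟨h1, rfl⟩; exact ⟨⟨h1, hc⟩, rfl⟩
    · rintro ⟨⟨h1, _⟩, h2⟩; exact ⟨h1, h2⟩
  obtain ⟨T, -, hT1, hT2⟩ := exists_subset_sum_mem (Finset.univ : Finset H.ConnectedComponent)
    (fun c => ((W.filter (fun v => H.connectedComponentMk v = c)).card : ℝ)) hh hM
    (fun c _ => le_trans (by
      exact_mod_cast Finset.card_le_card (fun v hv => mem_compVerts.2 (Finset.mem_filter.1 hv).2))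
      (hsmall c))
    (by rw [hfib]; simp only [Finset.mem_univ, Finset.filter_true]; linarith)
  rw [hfib] at hT1 hT2
  have hpiece : ∀ x, ∀ v ∈ ball H₁ r x, H.connectedComponentMk v = H.connectedComponentMk x :=
    fun x v hv => (SimpleGraph.ConnectedComponent.eq.2 ((reachable_of_mem_ball hv).mono hle)).symm
  set I := N.filter (fun x => H.connectedComponentMk x ∈ T) with hI
  set J := N.filter (fun x => H.connectedComponentMk x ∉ T) with hJ
  have hIT : ∀ v ∈ I.biUnion (ball H₁ r), H.connectedComponentMk v ∈ T := by
    intro v hv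
    obtain ⟨x, hx, hvx⟩ := Finset.mem_biUnion.1 hv
    rw [hpiece x v hvx]
    exact (Finset.mem_filter.1 hx).2
  have hJT : ∀ v ∈ J.biUnion (ball H₁ r), H.connectedComponentMk v ∉ T := by
    intro v hv
    obtain ⟨x, hx, hvx⟩ := Finset.mem_biUnion.1 hv
    rw [hpiece x v hvx]
    exact (Finset.mem_filter.1 hx).2
  have hI1 : W.filter (fun v => H.connectedComponentMk v ∈ T) ⊆ I.biUnion (ball H₁ r) := by
    intro v hv
    obtain ⟨hvW, hvT⟩ := Finset.mem_filter.1 hv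
    obtain ⟨x, hx, hvx⟩ := hcov v hvW
    exact Finset.mem_biUnion.2 ⟨x, Finset.mem_filter.2 ⟨hx, hpiece x v hvx ▸ hvT⟩, hvx⟩
  have hJ1 : W.filter (fun v => H.connectedComponentMk v ∉ T) ⊆ J.biUnion (ball H₁ r) := by
    intro v hv
    obtain ⟨hvW, hvT⟩ := Finset.mem_filter.1 hv
    obtain ⟨x, hx, hvx⟩ := hcov v hvW
    exact Finset.mem_biUnion.2 ⟨x, Finset.mem_filter.2 ⟨hx, hpiece x v hvx ▸ hvT⟩, hvx⟩
  have hsplit : ((W.filter (fun v => H.connectedComponentMk v ∈ T)).card : ℝ) +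
      (W.filter (fun v => H.connectedComponentMk v ∉ T)).card = W.card := by
    exact_mod_cast Finset.card_filter_add_card_filter_not (s := W) _
  have hIc : ((W.filter (fun v => H.connectedComponentMk v ∈ T)).card : ℝ) ≤
      (I.biUnion (ball H₁ r)).card := by exact_mod_cast Finset.card_le_card hI1
  have hJc : ((W.filter (fun v => H.connectedComponentMk v ∉ T)).card : ℝ) ≤
      (J.biUnion (ball H₁ r)).card := by exact_mod_cast Finset.card_le_card hJ1
  obtain ⟨x, hx, y, hy, hxy⟩ := hlink I (Finset.filter_subset _ _) J (Finset.filter_subset _ _)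
    (Finset.disjoint_left.2 fun v hv hv' => hJT v hv' (hIT v hv)) (by linarith) (by linarith)
    ∅ (by simpa using hm)
  refine hJT y hy ?_
  have hxy' : H.Reachable x y := hxy.mono (SimpleGraph.fromEdgeSet_mono (by simp))
  rw [← SimpleGraph.ConnectedComponent.eq.2 hxy']
  exact hIT x hx

lemma card_edges_touching_le {G : SimpleGraph V} {d : ℕ}
    (hd : ∀ v, (G.neighborSet v).ncard = d) (S : Finset V) :
    ((edgeFinset' G).filter (fun e => ∃ z ∈ S, z ∈ e)).card ≤ S.card * d := by
  have hsub : (edgeFinset' G).filter (fun e => ∃ z ∈ S, z ∈ e) ⊆ S.biUnion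
      (fun v => (Finset.univ.filter (fun w => G.Adj v w)).image (fun w => s(v, w))) := by
    intro e he
    obtain ⟨he, z, hzS, hz⟩ := Finset.mem_filter.1 he
    obtain ⟨y, rfl⟩ := Sym2.mem_iff_exists.1 hz
    have : G.Adj z y := mem_edgeFinset'.1 he
    exact Finset.mem_biUnion.2 ⟨z, hzS, Finset.mem_image.2 ⟨y, by simpa, rfl⟩⟩
  refine (Finset.card_le_card hsub).trans (Finset.card_biUnion_le_card_mul _ _ _ fun v _ => ?_)
  exact Finset.card_image_le.trans (card_filter_adj hd v).le

lemma not_separated {G : SimpleGraph V} {d : ℕ} (hd : ∀ v, (G.neighborSet v).ncard = d)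
    (hs : s ⊆ edgeFinset' G) (ht : t ⊆ edgeFinset' G) (hlink : PiecesLinked h m r N s t)
    (hcov : ∀ v ∈ W, ∃ x ∈ N, v ∈ ball (SimpleGraph.fromEdgeSet (s : Set (Sym2 V))) r x)
    {A B S : Finset V} (hAB : Disjoint A B)
    (hclA : ∀ u ∈ A, ∀ v,
      (SimpleGraph.fromEdgeSet ((s ∪ t : Finset (Sym2 V)) : Set (Sym2 V))).Adj u v → v ∈ A ∨ v ∈ S)
    (hclB : ∀ u ∈ B, ∀ v,
      (SimpleGraph.fromEdgeSet ((s ∪ t : Finset (Sym2 V)) : Set (Sym2 V))).Adj u v → v ∈ B ∨ v ∈ S)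
    (hS : (S.card : ℝ) * d < m)
    (hA : h + S.card * ((d : ℝ) + 1) ^ (r + r) ≤ (A ∩ W).card)
    (hB : h + S.card * ((d : ℝ) + 1) ^ (r + r) ≤ (B ∩ W).card) : False := by
  set H := SimpleGraph.fromEdgeSet ((s ∪ t : Finset (Sym2 V)) : Set (Sym2 V)) with hH
  set H₁ := SimpleGraph.fromEdgeSet (s : Set (Sym2 V)) with hH₁
  have hle : H₁ ≤ H := SimpleGraph.fromEdgeSet_mono (by simp)
  have hA' : ((A ∩ W).card : ℝ) ≤ _ :=
    Nat.cast_le.2 (card_inter_le_pieces hd (fromEdgeSet_le hs) hle hclA hcov)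
  have hB' : ((B ∩ W).card : ℝ) ≤ _ :=
    Nat.cast_le.2 (card_inter_le_pieces hd (fromEdgeSet_le hs) hle hclB hcov)
  push_cast at hA' hB'
  have hsub : ∀ D : Finset V, (N.filter (fun x => ball H₁ r x ⊆ D)).biUnion (ball H₁ r) ⊆ D :=
    fun D => Finset.biUnion_subset.2 fun x hx => (Finset.mem_filter.1 hx).2
  obtain ⟨x, hx, y, hy, ⟨w⟩⟩ := hlink (N.filter (fun x => ball H₁ r x ⊆ A))
    (Finset.filter_subset _ _) (N.filter (fun x => ball H₁ r x ⊆ B)) (Finset.filter_subset _ _)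
    (Finset.disjoint_of_subset_left (hsub A) (Finset.disjoint_of_subset_right (hsub B) hAB))
    (by linarith) (by linarith) ((edgeFinset' G).filter (fun e => ∃ z ∈ S, z ∈ e))
    (lt_of_le_of_lt (by exact_mod_cast card_edges_touching_le hd S) hS)
  refine Finset.disjoint_left.1 hAB (mem_of_walk_of_closed (S := ∅) ?_ w (by simp) (hsub A hx))
    (hsub B hy)
  intro u hu v huv
  obtain ⟨hmem, hne⟩ := (SimpleGraph.fromEdgeSet_adj _).1 huv
  obtain ⟨het, heF⟩ := Finset.mem_sdiff.1 (Finset.mem_coe.1 hmem)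
  refine Or.inl ((hclA u hu v ((SimpleGraph.fromEdgeSet_adj _).2
    ⟨by simpa using Or.inr het, hne⟩)).resolve_right fun hvS => heF ?_)
  exact Finset.mem_filter.2 ⟨ht het, v, hvS, by simp⟩

end Pieces

section Separators

variable {G : SimpleGraph V} {s t : Finset (Sym2 V)} {N : Finset V} {d k r : ℕ} {h m : ℝ}

lemma not_isSeparator_of_piecesLinked (hd : ∀ v, (G.neighborSet v).ncard = d)
    (hs : s ⊆ edgeFinset' G) (ht : t ⊆ edgeFinset' G) (hlink : PiecesLinked h m r N s t)
    (hcov : ∀ v, RootReach G s k v →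
      ∃ x ∈ N, v ∈ ball (SimpleGraph.fromEdgeSet (s : Set (Sym2 V))) r x)
    (hm : 0 < m) (hh : 0 ≤ h) {M e q : ℝ} (hM : ((d : ℝ) + 1) ^ k ≤ M)
    (hW : 2 * h + M ≤ numReach G k s) (he : numReach G k (s ∪ t) ≤ numReach G k s + e)
    (hq : q * d < m) (hbal : h + q * ((d : ℝ) + 1) ^ (r + r) + e + q ≤ M / 3)
    {H : SimpleGraph V}
    (hH : H = SimpleGraph.fromEdgeSet ((s ∪ t : Finset (Sym2 V)) : Set (Sym2 V)))
    (c₁ : H.ConnectedComponent) (hc₁ : IsLargestComp H c₁) (S : Finset c₁.supp)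
    (hS : (S.card : ℝ) ≤ q) : ¬ IsSeparator (H.induce c₁.supp) S := by
  set W := Finset.univ.filter (fun v => RootReach G s k v) with hWdef
  set W' := Finset.univ.filter (fun v => RootReach G (s ∪ t) k v) with hWdef'
  have hWW' : W ⊆ W' := Finset.monotone_filter_right _ fun v _ =>
    rootReach_mono Finset.subset_union_left
  have hd0 : (0 : ℝ) ≤ ((d : ℝ) + 1) ^ k := by positivity
  have hcov' : ∀ v ∈ W, ∃ x ∈ N, v ∈ ball (SimpleGraph.fromEdgeSet (s : Set (Sym2 V))) r x :=
    fun v hv => hcov v (Finset.mem_filter.1 hv).2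
  obtain ⟨c₀, hc₀⟩ : ∃ c₀ : H.ConnectedComponent, M < (compVerts H c₀).card := by
    rw [hH]; exact exists_large_component hlink hm hcov' hh (hd0.trans hM) hW
  have hc : M < (compVerts H c₁).card := hc₀.trans_le (by exact_mod_cast hc₁ c₀)
  have hgiant : ∀ v ∈ compVerts H c₁, v ∈ W' := by
    intro v hv
    refine Finset.mem_filter.2 ⟨Finset.mem_univ _, rootReach_of_card hd
      (Finset.union_subset hs ht) (A := compVerts H c₁) (fun y hy => ?_) ?_⟩
    · rw [← hH]
      exact SimpleGraph.ConnectedComponent.eq.1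
        ((mem_compVerts.1 hv).trans (mem_compVerts.1 hy).symm)
    · exact_mod_cast hM.trans_lt hc
  have hinter : ∀ A : Finset V, A ⊆ compVerts H c₁ → (A.card : ℝ) - e ≤ (A ∩ W).card := by
    intro A hA
    have h1 : A \ W ⊆ W' \ W := Finset.sdiff_subset_sdiff (fun v hv => hgiant v (hA hv)) subset_rfl
    have h2 : ((A \ W).card : ℝ) ≤ (W' \ W).card := by exact_mod_cast Finset.card_le_card h1
    have h3 : ((W' \ W).card : ℝ) + W.card = W'.card := by
      exact_mod_cast Finset.card_sdiff_add_card_eq_card hWW'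
    have h4 : ((A \ W).card : ℝ) + (A ∩ W).card = A.card := by
      exact_mod_cast Finset.card_sdiff_add_card_inter A W
    have he' : (W'.card : ℝ) ≤ W.card + e := he
    linarith
  rintro ⟨A, B, hAB, hAS, hBS, hcover, hadj, hAc, hBc⟩
  have hcard : Fintype.card c₁.supp = (compVerts H c₁).card :=
    Fintype.card_of_subtype _ fun x => mem_compVerts.trans
      (SimpleGraph.ConnectedComponent.mem_supp_iff _ _).symm
  have htot : (compVerts H c₁).card ≤ A.card + B.card + S.card := by
    rw [← hcard, ← Finset.card_univ]
    refine (Finset.card_le_card (t := A ∪ B ∪ S) fun w _ => ?_).trans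
      ((Finset.card_union_le _ _).trans (Nat.add_le_add_right (Finset.card_union_le _ _) _))
    rcases hcover w with h | h | h <;> simp [h]
  rw [hcard] at hAc hBc
  have htot' : ((compVerts H c₁).card : ℝ) ≤ A.card + B.card + S.card := by exact_mod_cast htot
  have hAc' : 3 * (A.card : ℝ) ≤ 2 * (compVerts H c₁).card := by exact_mod_cast hAc
  have hBc' : 3 * (B.card : ℝ) ≤ 2 * (compVerts H c₁).card := by exact_mod_cast hBc
  set ι := Function.Embedding.subtype (· ∈ c₁.supp) with hι
  have hsub : ∀ D : Finset c₁.supp, D.map ι ⊆ compVerts H c₁ := by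
    intro D v hv
    obtain ⟨w, _, rfl⟩ := Finset.mem_map.1 hv
    exact mem_compVerts.2 w.2
  have hclosed : ∀ D D' : Finset c₁.supp, (∀ w, w ∈ D ∨ w ∈ D' ∨ w ∈ S) →
      (∀ a ∈ D, ∀ b ∈ D', ¬ (H.induce c₁.supp).Adj a b) →
      ∀ u ∈ D.map ι, ∀ v, H.Adj u v → v ∈ D.map ι ∨ v ∈ S.map ι := by
    intro D D' hc hD u hu v huv
    obtain ⟨w, hw, rfl⟩ := Finset.mem_map.1 hu
    have hv : v ∈ c₁.supp := c₁.mem_supp_of_adj_mem_supp w.2 huv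
    rcases hc ⟨v, hv⟩ with h | h | h
    · exact Or.inl (Finset.mem_map.2 ⟨_, h, rfl⟩)
    · exact absurd huv (hD w hw _ h)
    · exact Or.inr (Finset.mem_map.2 ⟨_, h, rfl⟩)
  have hX : (S.card : ℝ) * ((d : ℝ) + 1) ^ (r + r) ≤ q * ((d : ℝ) + 1) ^ (r + r) :=
    mul_le_mul_of_nonneg_right hS (by positivity)
  have hA1 := hinter _ (hsub A)
  have hB1 := hinter _ (hsub B)
  rw [Finset.card_map] at hA1 hB1
  refine not_separated hd hs ht hlink hcov' (A := A.map ι) (B := B.map ι) (S := S.map ι)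
    ((Finset.disjoint_map ι).2 hAB) (hH ▸ hclosed A B hcover hadj)
    (hH ▸ hclosed B A (fun w => (hcover w).elim (fun h => .inr (.inl h))
      (fun h => h.elim .inl (fun h => .inr (.inr h)))) fun a ha b hb hab => hadj b hb a ha hab.symm)
    ?_ ?_ ?_
  · rw [Finset.card_map]
    exact (mul_le_mul_of_nonneg_right hS (Nat.cast_nonneg d)).trans_lt hq
  · rw [Finset.card_map]; linarith
  · rw [Finset.card_map]; linarith

end Separators

section Probability

lemma bexp_not_linked_le {G : SimpleGraph V} {L : ℕ} {A B : Finset V}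
    {𝒬 : Finset (Finset (Sym2 V))} (hdis : (𝒬 : Set (Finset (Sym2 V))).PairwiseDisjoint id)
    (hcon : ∀ Q ∈ 𝒬, IsConnector G L A B Q) {m p : ℝ} (h0 : 0 ≤ p) (h1 : p ≤ 1) :
    bexp (edgeFinset' G) p (fun t => if Linked m t A B then 0 else 1) ≤
      bexp (edgeFinset' G) p
        (fun t => if ((𝒬.filter (fun Q => Q ⊆ t)).card : ℝ) < m then 1 else 0) := by
  refine bexp_mono h0 h1 fun t _ => ?_
  split_ifs with h2 h3 h3
  · norm_num
  · exact le_rfl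
  · exact le_rfl
  · exact absurd (linked_of_connectors hdis hcon (not_lt.1 h3)) h2

lemma bexp_not_piecesLinked_le {E : Finset (Sym2 V)} {p h m ρ : ℝ} (h0 : 0 ≤ p) (h1 : p ≤ 1)
    (hconn : ∀ A B : Finset V, Disjoint A B → h ≤ A.card → h ≤ B.card →
      bexp E p (fun t => if Linked m t A B then 0 else 1) ≤ ρ) (hρ : 0 ≤ ρ)
    (r : ℕ) (N : Finset V) (s : Finset (Sym2 V)) :
    bexp E p (fun t => if PiecesLinked h m r N s t then 0 else 1) ≤ 4 ^ N.card * ρ := by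
  set U : Finset V → Finset V :=
    fun I => I.biUnion (ball (SimpleGraph.fromEdgeSet (s : Set (Sym2 V))) r) with hU
  set f : Finset V → Finset V → Finset (Sym2 V) → ℝ := fun I J t =>
    if Disjoint (U I) (U J) ∧ h ≤ (U I).card ∧ h ≤ (U J).card ∧ ¬ Linked m t (U I) (U J)
      then 1 else 0 with hf
  have hf0 : ∀ I J t, 0 ≤ f I J t := fun I J t => by simp only [hf]; split_ifs <;> norm_num
  have hfb : ∀ I J, bexp E p (f I J) ≤ ρ := by
    intro I J
    by_cases hc : Disjoint (U I) (U J) ∧ h ≤ (U I).card ∧ h ≤ (U J).card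
    · refine le_trans (bexp_mono h0 h1 fun t _ => ?_) (hconn _ _ hc.1 hc.2.1 hc.2.2)
      simp only [hf]
      split_ifs with h2 h3 <;> first | exact absurd h3 h2.2.2.2 | norm_num
    · refine le_trans (bexp_mono (g := fun _ => 0) h0 h1 fun t _ => ?_) ((bexp_const _ _ _).trans_le hρ)
      simp only [hf]
      rw [if_neg fun h2 => hc ⟨h2.1, h2.2.1, h2.2.2.1⟩]
  calc bexp E p (fun t => if PiecesLinked h m r N s t then 0 else 1)
      ≤ bexp E p (fun t => ∑ I ∈ N.powerset, ∑ J ∈ N.powerset, f I J t) := by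
        refine bexp_mono h0 h1 fun t _ => ?_
        split_ifs with hP
        · exact Finset.sum_nonneg fun I _ => Finset.sum_nonneg fun J _ => hf0 I J t
        · unfold PiecesLinked at hP
          push Not at hP
          obtain ⟨I, hI, J, hJ, h2, h3, h4, h5⟩ := hP
          have h6 : f I J t = 1 := if_pos ⟨h2, h3, h4, h5⟩
          rw [← h6]
          exact (Finset.single_le_sum (f := fun J => f I J t) (fun J _ => hf0 I J t)
            (Finset.mem_powerset.2 hJ)).trans
            (Finset.single_le_sum (f := fun I => ∑ J ∈ N.powerset, f I J t)
              (fun I _ => Finset.sum_nonneg fun J _ => hf0 I J t) (Finset.mem_powerset.2 hI))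
    _ = ∑ I ∈ N.powerset, ∑ J ∈ N.powerset, bexp E p (f I J) := by
        rw [bexp_sum]
        exact Finset.sum_congr rfl fun I _ => bexp_sum _ _ _ _
    _ ≤ ∑ I ∈ N.powerset, ∑ J ∈ N.powerset, ρ :=
        Finset.sum_le_sum fun I _ => Finset.sum_le_sum fun J _ => hfb I J
    _ = 4 ^ N.card * ρ := by
        simp only [Finset.sum_const, Finset.card_powerset, nsmul_eq_mul, Nat.cast_pow,
          Nat.cast_ofNat]
        rw [← mul_assoc, ← mul_pow]; norm_num

/-- Union bound for an increasing two-round exposure. -/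
lemma one_sub_le_percProb {G : SimpleGraph V} {p p₁ p₂ : ℝ} (hp₁ : 0 ≤ p₁) (hp₁' : p₁ ≤ 1)
    (hp₂ : 0 ≤ p₂) (hp₂' : p₂ ≤ 1) (hp : 1 - p = (1 - p₁) * (1 - p₂))
    {P : SimpleGraph V → Prop} {X Y : Finset (Sym2 V) → Prop}
    {Z : Finset (Sym2 V) → Finset (Sym2 V) → Prop}
    (hXYZ : ∀ s ⊆ edgeFinset' G, ∀ t ⊆ edgeFinset' G, ¬ X s → ¬ Y (s ∪ t) → Z s t →
      P (SimpleGraph.fromEdgeSet ((s ∪ t : Finset (Sym2 V)) : Set (Sym2 V)))) {ρ : ℝ}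
    (hX : bexp (edgeFinset' G) p₁ (fun s => if X s then 1 else 0) ≤ ρ)
    (hY : bexp (edgeFinset' G) p (fun s => if Y s then 1 else 0) ≤ ρ)
    (hZ : ∀ s, bexp (edgeFinset' G) p₂ (fun t => if Z s t then 0 else 1) ≤ ρ) :
    1 - 3 * ρ ≤ percProb G p P := by
  have h1 : percProb G p P = bexp (edgeFinset' G) p (fun s =>
      if P (SimpleGraph.fromEdgeSet (s : Set (Sym2 V))) then 1 else 0) := rfl
  have h2 := bexp_one_sub (edgeFinset' G) p (fun s =>
      if P (SimpleGraph.fromEdgeSet (s : Set (Sym2 V))) then 1 else 0)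
  rw [← h1, bexp_sprinkle _ hp] at h2
  have h3 : bexp (edgeFinset' G) p₁ (fun s => bexp (edgeFinset' G) p₂ (fun t =>
      1 - if P (SimpleGraph.fromEdgeSet ((s ∪ t : Finset (Sym2 V)) : Set (Sym2 V)))
        then 1 else 0)) ≤
      bexp (edgeFinset' G) p₁ (fun s => (if X s then 1 else 0) +
        (bexp (edgeFinset' G) p₂ (fun t => if Y (s ∪ t) then 1 else 0) + ρ)) := by
    refine bexp_mono hp₁ hp₁' fun s hs => ?_
    have h4 : bexp (edgeFinset' G) p₂ (fun t =>
        1 - if P (SimpleGraph.fromEdgeSet ((s ∪ t : Finset (Sym2 V)) : Set (Sym2 V)))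
          then 1 else 0) ≤
        bexp (edgeFinset' G) p₂ (fun t => (if X s then 1 else 0) +
          ((if Y (s ∪ t) then 1 else 0) + if Z s t then 0 else 1)) := by
      refine bexp_mono hp₂ hp₂' fun t ht => ?_
      have := hXYZ s hs t ht
      split_ifs <;> norm_num
      tauto
    rw [bexp_add, bexp_add, bexp_const] at h4
    linarith [hZ s]
  rw [bexp_add, bexp_add, bexp_const, ← bexp_sprinkle _ hp (fun u => if Y u then 1 else 0)] at h3
  linarith

lemma percProb_nonneg {G : SimpleGraph V} {p : ℝ} (h0 : 0 ≤ p) (h1 : p ≤ 1)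
    (P : SimpleGraph V → Prop) : 0 ≤ percProb G p P := by
  have : 0 ≤ 1 - p := by linarith
  refine Finset.sum_nonneg fun s _ => mul_nonneg (by positivity) ?_
  split_ifs <;> norm_num

end Probability

lemma exists_numReach_tail_rate {d : ℕ} (hd0 : 0 < d) (k : ℕ) {ε : ℝ} (hε : 0 < ε) :
    ∃ c > (0 : ℝ), ∀ (V : Type) [Fintype V] [DecidableEq V] (G : SimpleGraph V),
      (∀ v, (G.neighborSet v).ncard = d) → ∀ p : ℝ, 0 ≤ p → p ≤ 1 →
      bexp (edgeFinset' G) p (fun s => if numReach G k s ≤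
        bexp (edgeFinset' G) p (numReach G k) - ε * Fintype.card V then 1 else 0)
        ≤ Real.exp (-c * Fintype.card V) ∧
      bexp (edgeFinset' G) p (fun s => if bexp (edgeFinset' G) p (numReach G k) +
        ε * Fintype.card V ≤ numReach G k s then 1 else 0) ≤ Real.exp (-c * Fintype.card V) := by
  set D : ℝ := (((d + 1) ^ (k + 1) : ℕ) : ℝ) with hD
  have hD0 : 0 < D := by rw [hD]; positivity
  have hd0' : (0 : ℝ) < d := by exact_mod_cast hd0
  set l : ℝ := min (1 / D) (ε / (2 * d * D ^ 2)) with hl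
  have hl0 : 0 < l := lt_min (by positivity) (by positivity)
  have hl1 : l * D ≤ 1 := by
    rw [← le_div_iff₀ hD0]; exact min_le_left _ _
  have hl2 : l * (2 * d * D ^ 2) ≤ ε := by
    rw [← le_div_iff₀ (by positivity)]; exact min_le_right _ _
  refine ⟨l * ε / 2, by positivity, fun V _ _ G hd p h0 h1 => ?_⟩
  have hE : ((edgeFinset' G).card : ℝ) ≤ Fintype.card V * d := by
    exact_mod_cast card_edgeFinset'_le hd
  have hexp : Real.exp ((edgeFinset' G).card * (l * D) ^ 2 - l * (ε * Fintype.card V)) ≤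
      Real.exp (-(l * ε / 2) * Fintype.card V) := by
    refine Real.exp_le_exp.2 ?_
    have h2 : ((edgeFinset' G).card : ℝ) * (l * D) ^ 2 ≤ Fintype.card V * d * (l * D) ^ 2 :=
      mul_le_mul_of_nonneg_right hE (by positivity)
    have h3 : (Fintype.card V : ℝ) * l * (l * (2 * d * D ^ 2)) ≤ Fintype.card V * l * ε :=
      mul_le_mul_of_nonneg_left hl2 (by positivity)
    nlinarith
  exact ⟨(bexp_lower_tail _ h0 h1 hl0.le hl1 _ (abs_numReach_insert_sub_le hd k)).trans hexp,
    (bexp_upper_tail _ h0 h1 hl0.le hl1 _ (abs_numReach_insert_sub_le hd k)).trans hexp⟩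

lemma four_pow_le_exp {k N n : ℕ} {γ : ℝ} (hk : 2 * Real.log 4 ≤ γ * k) (hγ : 0 ≤ γ)
    (hN : N * (k + 2) ≤ n) : (4 : ℝ) ^ N ≤ Real.exp (γ / 2 * n) := by
  rw [← Real.rpow_natCast, Real.rpow_def_of_pos (by norm_num)]
  refine Real.exp_le_exp.2 ?_
  have h1 : (N : ℝ) * k ≤ n := by exact_mod_cast (by nlinarith : N * k ≤ n)
  have h2 := mul_le_mul_of_nonneg_right hk (Nat.cast_nonneg (α := ℝ) N)
  have h3 := mul_le_mul_of_nonneg_left h1 hγ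
  nlinarith

theorem giant_has_no_small_separator (d : ℕ) (hd : 3 ≤ d) (p : ℝ)
    (hp : 1 / ((d : ℝ) - 1) < p) (hp1 : p < 1) (b : ℝ) (hb : 0 < b) :
    ∃ δ > (0:ℝ), ∃ c > (0:ℝ), ∃ C > (0:ℝ), ∃ R : ℕ, 0 < R ∧
      ∀ (V : Type) [Fintype V] [DecidableEq V] (G : SimpleGraph V),
        IsRegularExpander G b d → (R : ℕ∞) < G.girth →
        1 - C * Real.exp (-c * Fintype.card V) ≤
          percProb G p (fun H =>
            ∀ c₁ : H.ConnectedComponent, IsLargestComp H c₁ →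
              ∀ S : Finset (c₁.supp), (S.card : ℝ) ≤ δ * Fintype.card V →
                ¬ IsSeparator (H.induce c₁.supp) S) := by
  have hd0 : 0 < d := by omega
  have hd0' : (0 : ℝ) < d := by exact_mod_cast hd0
  obtain ⟨w, hw, hclose⟩ := exists_rootSurv_close hd hp hp1
  obtain ⟨p₁, hp₁, hp₁p, hsurv⟩ := hclose (w / 200) (by positivity)
  have hp0 : 0 < p := hp₁.trans hp₁p
  have hq₁ : 0 < 1 - p₁ := by linarith
  set p₂ : ℝ := 1 - (1 - p) / (1 - p₁) with hp₂
  have hp₂0 : 0 < p₂ := by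
    rw [hp₂, sub_pos, div_lt_one hq₁]; linarith
  have hp₂1 : p₂ < 1 := by
    rw [hp₂]; linarith [div_pos (sub_pos.2 hp1) hq₁]
  have hpp : 1 - p = (1 - p₁) * (1 - p₂) := by rw [hp₂]; field_simp; ring
  obtain ⟨κ, hκ, γ, hγ, L, hconn⟩ := exists_sprinkle_constants hd0 hb
    (show 0 < w / 18 by positivity) hp₂0 hp₂1
  obtain ⟨k, hk⟩ := exists_nat_ge (2 * Real.log 4 / γ)
  rw [div_le_iff₀ hγ, mul_comm (k : ℝ)] at hk
  obtain ⟨c', hc', htail⟩ := exists_numReach_tail_rate hd0 k (show 0 < w / 200 by positivity)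
  set r : ℕ := (k + 1) + (k + 1) with hr
  set X : ℝ := ((d : ℝ) + 1) ^ (r + r) with hX
  have hX0 : 0 < X := by positivity
  set δ : ℝ := min (w / (25 * (X + 1))) (κ / (2 * d)) with hδ
  have hδ0 : 0 < δ := lt_min (by positivity) (by positivity)
  have hδ1 : δ * (25 * (X + 1)) ≤ w := by
    rw [← le_div_iff₀ (by positivity)]; exact min_le_left _ _
  have hδ2 : δ * (2 * d) ≤ κ := by
    rw [← le_div_iff₀ (by positivity)]; exact min_le_right _ _
  set c : ℝ := min c' (γ / 2) with hc
  have hc0 : 0 < c := lt_min hc' (by positivity)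
  set n₁ : ℝ := 3 * ((d : ℝ) + 1) ^ k / w with hn₁
  refine ⟨δ, hδ0, c, hc0, 3 + Real.exp (c * n₁), by positivity, 2 * (k + 1), by omega, ?_⟩
  intro V _ _ G hG hgirth
  set n : ℝ := (Fintype.card V : ℝ) with hn
  have hn0 : 0 ≤ n := Nat.cast_nonneg _
  have hgirth' : 2 * (k + 1) < G.girth := by exact_mod_cast hgirth
  have hg : ∀ (a : V) (c : G.Walk a a), c.IsCycle → 2 * (k + 1) < c.length :=
    fun a c hc => hgirth'.trans_le (SimpleGraph.girth_le_length hc)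
  by_cases hsmall : n < n₁
  · refine le_trans ?_ (percProb_nonneg hp0.le hp1.le _)
    have h1 : 1 ≤ Real.exp (c * n₁) * Real.exp (-c * n) := by
      rw [← Real.exp_add, Real.one_le_exp_iff]
      nlinarith
    have h2 := Real.exp_pos (-c * n)
    nlinarith
  rw [not_lt, hn₁, div_le_iff₀ hw] at hsmall
  have hnpos : 0 < n := by
    have : 0 < ((d : ℝ) + 1) ^ k := by positivity
    by_contra hcon
    have : n = 0 := le_antisymm (not_lt.1 hcon) hn0
    rw [this] at hsmall
    linarith
  have hV : 0 < Fintype.card V := by rw [hn] at hnpos; exact_mod_cast hnpos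
  have hlinked : ∀ A B : Finset V, Disjoint A B → w / 18 * n ≤ A.card → w / 18 * n ≤ B.card →
      bexp (edgeFinset' G) p₂ (fun t => if Linked (κ * n) t A B then 0 else 1) ≤
        Real.exp (-γ * n) := by
    intro A B hAB hA hB
    obtain ⟨𝒬, hdis, hcon, hQ⟩ := hconn V G hG hV A B hAB hA hB
    exact (bexp_not_linked_le hdis hcon hp₂0.le hp₂1.le).trans hQ
  choose N hNW hNdis hNcov using fun s : Finset (Sym2 V) =>
    exists_net (SimpleGraph.fromEdgeSet (s : Set (Sym2 V))) (k + 1)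
      (Finset.univ.filter (fun v => RootReach G s k v))
  have hNcard : ∀ s, (N s).card * (k + 2) ≤ Fintype.card V := fun s =>
    card_net_mul_le (hNdis s) fun x hx =>
      card_ball_of_rootReach hg (by omega) (Finset.mem_filter.1 (hNW s hx)).2
  have hcexp : ∀ {a : ℝ}, c ≤ a → Real.exp (-a * n) ≤ Real.exp (-c * n) := fun h =>
    Real.exp_le_exp.2 (by nlinarith)
  have hbound : 1 - 3 * Real.exp (-c * n) ≤ percProb G p (fun H =>
      ∀ c₁ : H.ConnectedComponent, IsLargestComp H c₁ →
        ∀ S : Finset (c₁.supp), (S.card : ℝ) ≤ δ * n → ¬ IsSeparator (H.induce c₁.supp) S) := by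
    refine one_sub_le_percProb hp₁.le (by linarith) hp₂0.le hp₂1.le hpp
      (Z := fun s t => PiecesLinked (w / 18 * n) (κ * n) r (N s) s t) ?_
      ((htail V G hG.2 p₁ hp₁.le (by linarith)).1.trans (hcexp (min_le_left _ _)))
      ((htail V G hG.2 p hp0.le hp1.le).2.trans (hcexp (min_le_left _ _))) fun s => ?_
    · intro s hs t ht hlow hup hlink c₁ hc₁ S hS
      rw [not_le, bexp_numReach hG.2 hg le_rfl] at hlow hup
      obtain ⟨hs1, hs2⟩ := hsurv k
      have h1 : n * w ≤ n * rootSurv d p₁ k := mul_le_mul_of_nonneg_left hs1 hn0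
      have h2 : n * rootSurv d p k ≤ n * (rootSurv d p₁ k + w / 200) :=
        mul_le_mul_of_nonneg_left hs2 hn0
      have hwn : 0 < w * n := by positivity
      refine not_isSeparator_of_piecesLinked (M := w * n / 3) (e := 3 * (w / 200) * n)
        (q := δ * n) (k := k) hG.2 hs ht hlink (fun v hv => hNcov s v (by simpa using hv))
        (by positivity) (by positivity) ?_ ?_ ?_ ?_ ?_ rfl c₁ hc₁ S hS
      · linarith
      · linarith
      · linarith
      · have := mul_le_mul_of_nonneg_right hδ2 hn0
        have hκn : 0 < κ * n := by positivity
        linarith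
      · have := mul_le_mul_of_nonneg_right hδ1 hn0
        change w / 18 * n + δ * n * X + 3 * (w / 200) * n + δ * n ≤ w * n / 3 / 3
        linarith
    · refine (bexp_not_piecesLinked_le hp₂0.le hp₂1.le hlinked (Real.exp_pos _).le r _ s).trans ?_
      refine (mul_le_mul_of_nonneg_right (four_pow_le_exp hk hγ.le (hNcard s))
        (Real.exp_pos _).le).trans ?_
      rw [← Real.exp_add]
      refine le_trans (le_of_eq ?_) (hcexp (min_le_right _ _))
      congr 1
      rw [← hn]; ring
  have h1 := Real.exp_pos (-c * n)
  have h2 := mul_pos (Real.exp_pos (c * n₁)) h1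
  refine le_trans ?_ hbound
  linarith

end Percolation

end
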